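/- arXiv:2411.15107 — 2 statements merged into one kernel-verified Lean document; each statement's English description precedes it below -/
import Mathlib

section
/- Let M be a complete pointed metric space. If every point x ∈ M has a neighborhood U such that the Lipschitz-free space F(cl(U) ∪ {0}) has property (V*), then F(M) has property (V*). In other words, property (V*) is locally determined for Lipschitz-free spaces. -/
open Filter Topology Metric Set

noncomputable section

/-- A formal series `∑ yₙ` in a normed space `Y` is weakly unconditionally Cauchy (WUC)
if `∑ |⟨φ, yₙ⟩| < ∞` for every continuous linear functional `φ` on `Y`. -/
def IsWUC {Y : Type*} [SeminormedAddCommGroup Y] [NormedSpace ℝ Y] (y : ℕ → Y) : Prop :=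
  ∀ φ : Y →L[ℝ] ℝ, Summable fun n => |φ (y n)|

/-- `Γ` is a (V*)-set in `X`: for every WUC series `∑ fₙ` in the dual `X*`,
`sup_{x ∈ Γ} |⟨x, fₙ⟩| → 0`. -/
def IsVStarSet {X : Type*} [SeminormedAddCommGroup X] [NormedSpace ℝ X] (Γ : Set X) : Prop :=
  ∀ f : ℕ → (X →L[ℝ] ℝ), IsWUC f →
    ∀ ε > (0 : ℝ), ∀ᶠ n in atTop, ∀ x ∈ Γ, |f n x| ≤ ε

/-- `Γ` is relatively weakly compact: its closure in the weak topology is compact. -/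
def RelWeaklyCompact {X : Type*} [SeminormedAddCommGroup X] [NormedSpace ℝ X]
    (Γ : Set X) : Prop :=
  IsCompact (closure ((toWeakSpace ℝ X) '' Γ))

/-- A normed space has Pełczyński's property (V*) if every (V*)-set is relatively
weakly compact. -/
def HasPropertyVStar (X : Type*) [SeminormedAddCommGroup X] [NormedSpace ℝ X] : Prop :=
  ∀ Γ : Set X, IsVStarSet Γ → RelWeaklyCompact Γ

/-- `F`, together with the map `δ : M → F`, is (a realization of) the Lipschitz-free space
over the pointed metric space `(M, o)`: `δ` is a base-point-preserving isometric embedding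
whose range has dense linear span, and every Lipschitz function `f : M → ℝ` vanishing at
the base point lifts to a continuous linear functional of norm at most `Lip(f)` (this
characterizes `F(M)`, with dual `Lip₀(M)`, up to isometric isomorphism). -/
structure IsLipschitzFree {M : Type*} [MetricSpace M] (o : M)
    {F : Type*} [NormedAddCommGroup F] [NormedSpace ℝ F] (δ : M → F) : Prop where
  isometry : Isometry δ
  map_base : δ o = 0
  dense_span : Dense (Submodule.span ℝ (Set.range δ) : Set F)
  lift : ∀ (L : NNReal) (f : M → ℝ), LipschitzWith L f → f o = 0 →
    ∃ φ : F →L[ℝ] ℝ, ‖φ‖ ≤ L ∧ ∀ x, φ (δ x) = f x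

/-- The subspace of `F` corresponding to the Lipschitz-free space `F(S)` over a subset
`S ⊆ M`: the closed linear span of `δ(S)`. -/
def freeSpan {M : Type*} [MetricSpace M] {F : Type*} [NormedAddCommGroup F]
    [NormedSpace ℝ F] (δ : M → F) (S : Set M) : Submodule ℝ F :=
  (Submodule.span ℝ (δ '' S)).topologicalClosure

theorem mem_freeSpan {M : Type*} [MetricSpace M] {F : Type*} [NormedAddCommGroup F]
    [NormedSpace ℝ F] (δ : M → F) {S : Set M} {x : M} (hx : x ∈ S) :
    δ x ∈ freeSpan δ S :=
  (Submodule.span ℝ (δ '' S)).le_topologicalClosure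
    (Submodule.subset_span ⟨x, hx, rfl⟩)

theorem weak_le_nhds {X : Type*} [SeminormedAddCommGroup X] [NormedSpace ℝ X]
    (l : Filter X) (w : X) :
    Filter.map (toWeakSpace ℝ X) l ≤ 𝓝 (toWeakSpace ℝ X w) ↔
      ∀ φ : X →L[ℝ] ℝ, Tendsto φ l (𝓝 (φ w)) := by
  have hind : IsInducing (fun (x : WeakSpace ℝ X) (φ : X →L[ℝ] ℝ) =>
      φ ((toWeakSpace ℝ X).symm x)) := ⟨rfl⟩
  have := hind.tendsto_nhds_iff (f := toWeakSpace ℝ X) (l := l) (y := toWeakSpace ℝ X w)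
  unfold Tendsto at this ⊢
  rw [this]
  exact tendsto_pi_nhds

theorem rwc_iff {X : Type*} [SeminormedAddCommGroup X] [NormedSpace ℝ X] (Γ : Set X) :
    RelWeaklyCompact Γ ↔ ∀ l : Ultrafilter X, Γ ∈ l →
      ∃ w : X, ∀ φ : X →L[ℝ] ℝ, Tendsto φ l (𝓝 (φ w)) := by
  unfold RelWeaklyCompact
  constructor
  · intro h l hl
    have h1 : ((l.map (toWeakSpace ℝ X) : Ultrafilter _) : Filter (WeakSpace ℝ X)) ≤
        𝓟 (closure ((toWeakSpace ℝ X) '' Γ)) := by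
      rw [le_principal_iff]
      exact mem_of_superset (image_mem_map hl) subset_closure
    obtain ⟨w, -, hw⟩ := isCompact_iff_ultrafilter_le_nhds.1 h _ h1
    refine ⟨(toWeakSpace ℝ X).symm w, ?_⟩
    rw [← weak_le_nhds]
    simpa using hw
  · intro h
    rw [isCompact_iff_ultrafilter_le_nhds]
    intro v hv
    rw [le_principal_iff] at hv
    set G : Set (WeakSpace ℝ X) := (toWeakSpace ℝ X) '' Γ with hG
    let f : Filter (WeakSpace ℝ X) :=
      { sets := {E | ∃ O ∈ v, IsOpen O ∧ O ∩ G ⊆ E}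
        univ_sets := ⟨univ, univ_mem, isOpen_univ, subset_univ _⟩
        sets_of_superset := by
          rintro E E' ⟨O, h1, h2, h3⟩ h4
          exact ⟨O, h1, h2, h3.trans h4⟩
        inter_sets := by
          rintro E E' ⟨O, h1, h2, h3⟩ ⟨O', h1', h2', h3'⟩
          exact ⟨O ∩ O', inter_mem h1 h1', h2.inter h2', fun x hx =>
            ⟨h3 ⟨hx.1.1, hx.2⟩, h3' ⟨hx.1.2, hx.2⟩⟩⟩ }
    have hf : NeBot f := by
      rw [← empty_mem_iff_bot.not.trans neBot_iff.symm] 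
      rintro ⟨O, h1, h2, h3⟩
      obtain ⟨x, hx1, hx2⟩ := v.nonempty_of_mem (inter_mem h1 hv)
      obtain ⟨y, hy⟩ := mem_closure_iff.1 hx2 O h2 hx1
      exact h3 hy
    let u := Ultrafilter.of f
    have hu : (u : Filter _) ≤ f := Ultrafilter.of_le f
    have hGu : G ∈ u := hu ⟨univ, univ_mem, isOpen_univ, by simp⟩
    obtain ⟨w, hw⟩ := h (u.map (toWeakSpace ℝ X).symm) (by
      rw [Ultrafilter.mem_map]
      refine mem_of_superset hGu ?_
      rintro _ ⟨x, hx, rfl⟩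
      simpa using hx)
    have hw' := (weak_le_nhds _ _).2 hw
    have huw : (u : Filter (WeakSpace ℝ X)) ≤ 𝓝 (toWeakSpace ℝ X w) := by
      refine le_trans (le_of_eq ?_) hw'
      rw [Ultrafilter.coe_map, Filter.map_map]
      have : (toWeakSpace ℝ X : X → WeakSpace ℝ X) ∘ (toWeakSpace ℝ X).symm = id := by
        ext x; simp
      rw [this, Filter.map_id]
    have hvw : (v : Filter (WeakSpace ℝ X)) ≤ 𝓝 (toWeakSpace ℝ X w) := by
      rw [(closed_nhds_basis (toWeakSpace ℝ X w)).ge_iff]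
      rintro C ⟨hC, hCc⟩
      by_contra hn
      have h1 : Cᶜ ∈ v := Ultrafilter.compl_mem_iff_notMem.2 hn
      have h2 : Cᶜ ∈ u := hu ⟨Cᶜ, h1, hCc.isOpen_compl, inter_subset_left⟩
      exact Ultrafilter.compl_mem_iff_notMem.1 h2 (huw hC)
    exact ⟨_, isClosed_closure.mem_of_frequently_of_tendsto
      (Eventually.frequently hv) (tendsto_id.mono_left hvw), hvw⟩

theorem rwc_mono {X : Type*} [SeminormedAddCommGroup X] [NormedSpace ℝ X] {A B : Set X}
    (h : A ⊆ B) (hB : RelWeaklyCompact B) : RelWeaklyCompact A := by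
  rw [rwc_iff] at *
  exact fun l hl => hB l (mem_of_superset hl h)

theorem rwc_image {X Y : Type*} [SeminormedAddCommGroup X] [NormedSpace ℝ X]
    [SeminormedAddCommGroup Y] [NormedSpace ℝ Y] (T : X →L[ℝ] Y) {A : Set X}
    (hA : RelWeaklyCompact A) : RelWeaklyCompact (T '' A) := by
  rw [rwc_iff] at *
  intro l hl
  have : ∀ y : Y, ∃ x : X, y ∈ T '' A → x ∈ A ∧ T x = y := by
    intro y
    by_cases hy : y ∈ T '' A
    · obtain ⟨x, hx⟩ := hy
      exact ⟨x, fun _ => hx⟩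
    · exact ⟨0, fun h => absurd h hy⟩
  choose s hs using this
  obtain ⟨w, hw⟩ := hA (l.map s) (Ultrafilter.mem_map.2 <| mem_of_superset hl fun y hy => (hs y hy).1)
  refine ⟨T w, fun φ => ?_⟩
  have h1 : Tendsto (fun y => φ (T (s y))) l (𝓝 (φ (T w))) := hw (φ.comp T)
  refine h1.congr' ?_
  filter_upwards [hl] with y hy
  rw [(hs y hy).2]

theorem rwc_add {X : Type*} [SeminormedAddCommGroup X] [NormedSpace ℝ X] {A B C : Set X}
    (hA : RelWeaklyCompact A) (hB : RelWeaklyCompact B)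
    (h : ∀ x ∈ C, ∃ a ∈ A, ∃ b ∈ B, x = a + b) : RelWeaklyCompact C := by
  rw [rwc_iff] at *
  intro l hl
  have : ∀ y : X, ∃ a b : X, y ∈ C → a ∈ A ∧ b ∈ B ∧ y = a + b := by
    intro y
    by_cases hy : y ∈ C
    · obtain ⟨a, ha, b, hb, e⟩ := h y hy
      exact ⟨a, b, fun _ => ⟨ha, hb, e⟩⟩
    · exact ⟨0, 0, fun h => absurd h hy⟩
  choose s t hs using this
  obtain ⟨w, hw⟩ := hA (l.map s) (Ultrafilter.mem_map.2 <| mem_of_superset hl fun y hy => (hs y hy).1)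
  obtain ⟨z, hz⟩ := hB (l.map t) (Ultrafilter.mem_map.2 <| mem_of_superset hl fun y hy => (hs y hy).2.1)
  refine ⟨w + z, fun φ => ?_⟩
  have h1 : Tendsto (fun y => φ (s y)) l (𝓝 (φ w)) := hw φ
  have h2 : Tendsto (fun y => φ (t y)) l (𝓝 (φ z)) := hz φ
  rw [map_add]
  refine (h1.add h2).congr' ?_
  filter_upwards [hl] with y hy
  rw [← map_add, ← (hs y hy).2.2]

/-- Grothendieck's criterion. -/
theorem rwc_of_approx {X : Type*} [NormedAddCommGroup X] [NormedSpace ℝ X] [CompleteSpace X]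
    {C : Set X} (h : ∀ ε > (0 : ℝ), ∃ W : Set X, RelWeaklyCompact W ∧
      ∀ x ∈ C, ∃ y ∈ W, ‖x - y‖ ≤ ε) : RelWeaklyCompact C := by
  rw [rwc_iff]
  intro l hl
  have H : ∀ n : ℕ, ∃ (r : X → X) (w : X), (∀ x ∈ C, ‖x - r x‖ ≤ (1 / 2 : ℝ) ^ n) ∧
      ∀ φ : X →L[ℝ] ℝ, Tendsto (fun x => φ (r x)) l (𝓝 (φ w)) := by
    intro n
    obtain ⟨W, hW, hWC⟩ := h ((1 / 2 : ℝ) ^ n) (by positivity)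
    have : ∀ y : X, ∃ a : X, y ∈ C → a ∈ W ∧ ‖y - a‖ ≤ (1 / 2 : ℝ) ^ n := by
      intro y
      by_cases hy : y ∈ C
      · obtain ⟨a, ha⟩ := hWC y hy
        exact ⟨a, fun _ => ha⟩
      · exact ⟨0, fun h => absurd h hy⟩
    choose r hr using this
    rw [rwc_iff] at hW
    obtain ⟨w, hw⟩ := hW (l.map r) (Ultrafilter.mem_map.2 <| mem_of_superset hl fun y hy => (hr y hy).1)
    exact ⟨r, w, fun x hx => (hr x hx).2, fun φ => hw φ⟩
  choose r w hr hw using H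
  have hbound : ∀ m n, ‖w m - w n‖ ≤ (1 / 2 : ℝ) ^ m + (1 / 2 : ℝ) ^ n := by
    intro m n
    obtain ⟨φ, hφ, hφ'⟩ := exists_dual_vector'' ℝ (w m - w n)
    have h1 : Tendsto (fun x => φ (r m x) - φ (r n x)) l (𝓝 (φ (w m) - φ (w n))) :=
      (hw m φ).sub (hw n φ)
    have h2 : φ (w m) - φ (w n) = ‖w m - w n‖ := by
      rw [← map_sub, hφ']; rfl
    rw [← h2]
    refine le_of_tendsto h1 ?_
    filter_upwards [hl] with x hx
    rw [← map_sub]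
    refine (le_abs_self _).trans ?_
    rw [← Real.norm_eq_abs]
    refine (φ.le_of_opNorm_le hφ _).trans ?_
    rw [one_mul]
    have e : r m x - r n x = (x - r n x) - (x - r m x) := by abel
    rw [e]
    refine (norm_sub_le _ _).trans ?_
    linarith [hr m x hx, hr n x hx]
  have hpow : Tendsto (fun n : ℕ => (1 / 2 : ℝ) ^ n) atTop (𝓝 0) :=
    tendsto_pow_atTop_nhds_zero_of_lt_one (by norm_num) (by norm_num)
  have hc : CauchySeq w := by
    refine cauchySeq_of_le_tendsto_0 (fun n => (1 / 2 : ℝ) ^ n + (1 / 2 : ℝ) ^ n) ?_ ?_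
    · intro n m N hn hm
      rw [dist_eq_norm]
      refine (hbound n m).trans ?_
      exact add_le_add (pow_le_pow_of_le_one (by norm_num) (by norm_num) hn)
        (pow_le_pow_of_le_one (by norm_num) (by norm_num) hm)
    · simpa using hpow.add hpow
  obtain ⟨z, hz⟩ := cauchySeq_tendsto_of_complete hc
  refine ⟨z, fun φ => ?_⟩
  rw [Metric.tendsto_nhds]
  intro ε hε
  have h1 : Tendsto (fun n : ℕ => ‖φ‖ * (1 / 2 : ℝ) ^ n) atTop (𝓝 0) := by
    simpa using hpow.const_mul ‖φ‖
  have h2 : Tendsto (fun n => φ (w n)) atTop (𝓝 (φ z)) := (φ.continuous.tendsto z).comp hz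
  obtain ⟨n, hn1, hn2⟩ := ((h1.eventually_lt_const (show (0:ℝ) < ε / 3 by linarith)).and
    (Metric.tendsto_nhds.1 h2 (ε / 3) (by linarith))).exists
  filter_upwards [hl, Metric.tendsto_nhds.1 (hw n φ) (ε / 3) (by linarith)] with x hx hx2
  have h3 : dist (φ x) (φ (r n x)) ≤ ‖φ‖ * (1 / 2 : ℝ) ^ n := by
    rw [dist_eq_norm, ← map_sub]
    exact (φ.le_opNorm _).trans (mul_le_mul_of_nonneg_left (hr n x hx) (norm_nonneg _))
  have h4 := dist_triangle4 (φ x) (φ (r n x)) (φ (w n)) (φ z)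
  linarith

theorem vstar_image {X Y : Type*} [SeminormedAddCommGroup X] [NormedSpace ℝ X]
    [SeminormedAddCommGroup Y] [NormedSpace ℝ Y] (T : X →L[ℝ] Y) {A : Set X}
    (hA : IsVStarSet A) : IsVStarSet (T '' A) := by
  intro f hf ε hε
  have h1 : IsWUC (fun n => (f n).comp T) := by
    intro φ
    exact hf (φ.comp ((ContinuousLinearMap.compL ℝ X Y ℝ).flip T))
  filter_upwards [hA _ h1 ε hε] with n hn
  rintro _ ⟨x, hx, rfl⟩
  exact hn x hx

section FreeSpace

variable {M : Type*} [MetricSpace M] {o : M}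
  {F : Type*} [NormedAddCommGroup F] [NormedSpace ℝ F] {δ : M → F}

theorem free_norm (hδ : IsLipschitzFree o δ) (x : M) : ‖δ x‖ = dist x o := by
  rw [← hδ.isometry.dist_eq, hδ.map_base, dist_zero_right]

theorem free_ext (hδ : IsLipschitzFree o δ) {E : Type*} [NormedAddCommGroup E] [NormedSpace ℝ E]
    {S T : F →L[ℝ] E} (h : ∀ x, S (δ x) = T (δ x)) : S = T := by
  refine ContinuousLinearMap.ext_on hδ.dense_span ?_
  rintro _ ⟨x, rfl⟩
  exact h x

theorem free_norm_le (hδ : IsLipschitzFree o δ) (φ : F →L[ℝ] ℝ) {L : ℝ} (hL : 0 ≤ L)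
    (h : ∀ x y, |φ (δ x) - φ (δ y)| ≤ L * dist x y) : ‖φ‖ ≤ L := by
  obtain ⟨ψ, h1, h2⟩ := hδ.lift ⟨L, hL⟩ (fun x => φ (δ x))
    (LipschitzWith.of_dist_le_mul fun x y => by rw [Real.dist_eq]; exact h x y)
    (by simp [hδ.map_base])
  have : φ = ψ := free_ext hδ fun x => (h2 x).symm
  rw [this]
  exact h1

theorem free_mult [CompleteSpace F] (hδ : IsLipschitzFree o δ) (h : M → ℝ) (h1 : ∀ x, |h x| ≤ 1) {C : ℝ}
    (hC : 0 ≤ C) (h2 : ∀ x y, |h x - h y| * dist x o ≤ C * dist x y) :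
    ∃ T : F →L[ℝ] F, ‖T‖ ≤ 1 + C ∧ ∀ x, T (δ x) = h x • δ x := by
  have hlip : ∀ x y, ‖h x • δ x - h y • δ y‖ ≤ (1 + C) * dist x y := by
    intro x y
    have e : h x • δ x - h y • δ y = h y • (δ x - δ y) + (h x - h y) • δ x := by
      module
    rw [e]
    refine (norm_add_le _ _).trans ?_
    rw [norm_smul, norm_smul, free_norm hδ, ← dist_eq_norm, hδ.isometry.dist_eq, Real.norm_eq_abs,
      Real.norm_eq_abs]
    have := mul_le_mul_of_nonneg_right (h1 y) (dist_nonneg (x := x) (y := y))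
    linarith [h2 x y]
  let A := Finsupp.linearCombination ℝ δ
  let B := Finsupp.linearCombination ℝ (fun x => h x • δ x)
  have hd : DenseRange A := by
    have := hδ.dense_span
    rw [← Finsupp.range_linearCombination] at this
    rw [LinearMap.coe_range] at this
    exact this
  have hAB : ∀ c, ‖B c‖ ≤ (1 + C) * ‖A c‖ := by
    intro c
    obtain ⟨φ, hφ, hφ'⟩ := exists_dual_vector'' ℝ (B c)
    obtain ⟨ψ, hψ1, hψ2⟩ := hδ.lift ⟨1 + C, by positivity⟩ (fun x => φ (h x • δ x))
      (LipschitzWith.of_dist_le_mul fun x y => by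
        rw [dist_eq_norm, ← map_sub]
        refine (φ.le_of_opNorm_le hφ _).trans ?_
        rw [one_mul]
        exact hlip x y)
      (by simp [hδ.map_base])
    have e : φ (B c) = ψ (A c) := by
      simp only [A, B, Finsupp.linearCombination_apply, Finsupp.sum, map_sum, map_smul, hψ2]
    have e2 : ‖B c‖ = φ (B c) := by rw [hφ']; rfl
    rw [e2, e]
    refine (le_abs_self _).trans ?_
    rw [← Real.norm_eq_abs]
    exact ψ.le_of_opNorm_le hψ1 _
  refine ⟨B.extendOfNorm A, LinearMap.opNorm_extendOfNorm_le hd (by positivity) hAB, fun x => ?_⟩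
  have := LinearMap.extendOfNorm_eq hd ⟨_, hAB⟩ (Finsupp.single x 1)
  simpa [A, B] using this

/-- weighted distance to a set -/
def wdist (o : M) (A : Set M) (x : M) : ℝ := infDist x A / (1 + dist x o)

theorem wdist_lip (o : M) (A : Set M) (x y : M) :
    |wdist o A x - wdist o A y| * dist x o ≤ (2 + infDist o A) * dist x y := by
  have hx : 0 ≤ dist x o := dist_nonneg
  have hy : 0 ≤ dist y o := dist_nonneg
  have hax : 0 ≤ infDist x A := infDist_nonneg
  have hay : 0 ≤ infDist y A := infDist_nonneg
  have hao : 0 ≤ infDist o A := infDist_nonneg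
  have h1 : infDist y A ≤ infDist o A + dist y o := infDist_le_infDist_add_dist
  have h2 : |infDist x A - infDist y A| ≤ dist x y := by
    rw [abs_sub_le_iff]
    constructor
    · linarith [infDist_le_infDist_add_dist (s := A) (x := x) (y := y)]
    · linarith [infDist_le_infDist_add_dist (s := A) (x := y) (y := x), dist_comm x y]
  have h3 : |dist y o - dist x o| ≤ dist x y := by
    rw [dist_comm x y]; exact abs_dist_sub_le y x o
  set d := dist x y
  have hd : 0 ≤ d := dist_nonneg
  have e : (wdist o A x - wdist o A y) * (1 + dist x o) =
      (infDist x A - infDist y A) + (infDist y A / (1 + dist y o)) * (dist y o - dist x o) := by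
    unfold wdist
    field_simp
    ring
  have h4 : infDist y A / (1 + dist y o) ≤ 1 + infDist o A := by
    rw [div_le_iff₀ (by positivity)]
    nlinarith
  have h5 : 0 ≤ infDist y A / (1 + dist y o) := by positivity
  calc |wdist o A x - wdist o A y| * dist x o
      ≤ |wdist o A x - wdist o A y| * (1 + dist x o) := by gcongr; linarith
    _ = |(wdist o A x - wdist o A y) * (1 + dist x o)| := by
        rw [abs_mul, abs_of_nonneg (show 0 ≤ 1 + dist x o by positivity)]
    _ ≤ |infDist x A - infDist y A| +
        |(infDist y A / (1 + dist y o)) * (dist y o - dist x o)| := by rw [e]; exact abs_add_le _ _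
    _ ≤ d + (1 + infDist o A) * d := by
        rw [abs_mul, abs_of_nonneg h5]
        gcongr
    _ = _ := by ring

theorem exists_bump [CompleteSpace F] (hδ : IsLipschitzFree o δ) (A : Set M) {s : ℝ}
    (hs : 0 < s) : ∃ (T : F →L[ℝ] F) (h : M → ℝ), ‖T‖ ≤ 1 + (2 + infDist o A) / s ∧
      (∀ x, T (δ x) = h x • δ x) ∧ (∀ x, wdist o A x ≤ s → h x = 1) ∧
      (∀ x, 2 * s ≤ wdist o A x → h x = 0) := by
  have hao : 0 ≤ infDist o A := infDist_nonneg
  let h : M → ℝ := fun x => max 0 (min 1 (2 - wdist o A x / s))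
  have h01 : ∀ x, 0 ≤ h x ∧ h x ≤ 1 := fun x => by
    constructor <;> simp [h]
  have hlip : ∀ x y, |h x - h y| ≤ |wdist o A x - wdist o A y| / s := by
    intro x y
    have e : |wdist o A x - wdist o A y| / s =
        |(2 - wdist o A x / s) - (2 - wdist o A y / s)| := by
      rw [abs_sub_comm (wdist o A x), ← abs_of_pos hs, ← abs_div, abs_of_pos hs]
      congr 1; ring
    rw [e]
    refine (abs_max_sub_max_le_max _ _ _ _).trans ?_
    refine max_le (by simp) ?_
    refine (abs_min_sub_min_le_max _ _ _ _).trans ?_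
    exact max_le (by simp) le_rfl
  obtain ⟨T, hT1, hT2⟩ := free_mult hδ h
    (fun x => by rw [abs_of_nonneg (h01 x).1]; exact (h01 x).2)
    (C := (2 + infDist o A) / s) (by positivity) (fun x y => by
      calc |h x - h y| * dist x o ≤ (|wdist o A x - wdist o A y| / s) * dist x o := by
            gcongr; exact hlip x y
        _ = (|wdist o A x - wdist o A y| * dist x o) / s := by ring
        _ ≤ ((2 + infDist o A) * dist x y) / s := by
            exact div_le_div_of_nonneg_right (wdist_lip o A x y) hs.le
        _ = _ := by ring)
  refine ⟨T, h, hT1, hT2, fun x hx => ?_, fun x hx => ?_⟩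
  · have : wdist o A x / s ≤ 1 := by rw [div_le_iff₀ hs]; linarith
    simp only [h]
    rw [min_eq_left (by linarith), max_eq_right zero_le_one]
  · have : 2 ≤ wdist o A x / s := by rw [le_div_iff₀ hs]; linarith
    simp only [h]
    rw [min_eq_right (by linarith), max_eq_left (by linarith)]

theorem wuc_of_disjoint (hδ : IsLipschitzFree o δ) (g : ℕ → F →L[ℝ] ℝ) {C : ℝ}
    (hC : ∀ n, ‖g n‖ ≤ C)
    (hdisj : ∀ m n, m ≠ n → ∀ x, g m (δ x) = 0 ∨ g n (δ x) = 0) : IsWUC g := by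
  have hC0 : 0 ≤ C := (norm_nonneg _).trans (hC 0)
  have key : ∀ (s : Finset ℕ) (a : ℕ → ℝ), (∀ n, |a n| ≤ 1) → ‖∑ n ∈ s, a n • g n‖ ≤ 2 * C := by
    intro s a ha
    refine free_norm_le hδ _ (by positivity) fun x y => ?_
    have hone : ∀ z : M, ∃ m : ℕ, ∀ n, n ≠ m → g n (δ z) = 0 := by
      intro z
      by_cases hz : ∃ m, g m (δ z) ≠ 0
      · obtain ⟨m, hm⟩ := hz
        exact ⟨m, fun n hn => (hdisj n m hn z).resolve_right hm⟩
      · push Not at hz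
        exact ⟨0, fun n _ => hz n⟩
    obtain ⟨m, hm⟩ := hone x
    obtain ⟨k, hk⟩ := hone y
    have hterm : ∀ n, |a n * (g n (δ x) - g n (δ y))| ≤ C * dist x y := by
      intro n
      rw [abs_mul, ← map_sub, ← Real.norm_eq_abs (g n _)]
      have h1 := (g n).le_of_opNorm_le (hC n) (δ x - δ y)
      rw [← dist_eq_norm (δ x), hδ.isometry.dist_eq] at h1
      have := mul_le_mul (ha n) h1 (norm_nonneg _) zero_le_one
      linarith
    have e : (∑ n ∈ s, a n • g n) (δ x) - (∑ n ∈ s, a n • g n) (δ y) =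
        ∑ n ∈ s, a n * (g n (δ x) - g n (δ y)) := by
      simp [mul_sub, Finset.sum_sub_distrib]
    rw [e]
    refine (Finset.abs_sum_le_sum_abs _ _).trans ?_
    have hsub : ∑ n ∈ s, |a n * (g n (δ x) - g n (δ y))| ≤
        ∑ n ∈ ({m, k} : Finset ℕ), |a n * (g n (δ x) - g n (δ y))| := by
      have h1 : ∑ n ∈ ({m, k} : Finset ℕ), |a n * (g n (δ x) - g n (δ y))| =
          ∑ n ∈ s ∪ {m, k}, |a n * (g n (δ x) - g n (δ y))| := by
        refine Finset.sum_subset Finset.subset_union_right fun n _ hn => ?_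
        simp only [Finset.mem_insert, Finset.mem_singleton, not_or] at hn
        rw [hm n hn.1, hk n hn.2]; simp
      rw [h1]
      exact Finset.sum_le_sum_of_subset_of_nonneg Finset.subset_union_left
        fun n _ _ => abs_nonneg _
    refine hsub.trans ?_
    refine (Finset.sum_le_card_nsmul _ _ _ fun n _ => hterm n).trans ?_
    rw [nsmul_eq_mul]
    have h2 : ((({m, k} : Finset ℕ).card : ℕ) : ℝ) ≤ 2 := by exact_mod_cast Finset.card_le_two
    have : 0 ≤ C * dist x y := by positivity
    nlinarith
  intro φ
  refine summable_of_sum_le (c := ‖φ‖ * (2 * C)) (fun n => abs_nonneg _) fun s => ?_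
  have e : ∑ n ∈ s, |φ (g n)| = φ (∑ n ∈ s, (SignType.sign (φ (g n)) : ℝ) • g n) := by
    simp [map_sum]
  rw [e]
  refine (le_abs_self _).trans ?_
  rw [← Real.norm_eq_abs]
  refine (φ.le_opNorm _).trans ?_
  gcongr
  refine key s _ fun n => ?_
  rcases lt_trichotomy (φ (g n)) 0 with h | h | h <;> simp [h]

end FreeSpace

section Main

variable {M : Type*} [MetricSpace M] {o : M}
  {F : Type*} [NormedAddCommGroup F] [NormedSpace ℝ F] {δ : M → F}

theorem wdist_anti (o : M) {A B : Set M} (hA : A.Nonempty) (h : A ⊆ B) (x : M) :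
    wdist o B x ≤ wdist o A x := by
  unfold wdist
  exact div_le_div_of_nonneg_right (infDist_le_infDist_of_subset h hA)
    (by positivity)

theorem wdist_mem (o : M) {A : Set M} {x : M} (h : x ∈ A) : wdist o A x = 0 := by
  unfold wdist
  rw [infDist_zero_of_mem h, zero_div]

open Classical in
theorem vstar_tight [CompleteSpace F] (hδ : IsLipschitzFree o δ) {Γ : Set F} (hΓ : IsVStarSet Γ)
    {s ε : ℝ} (hs : 0 < s) (hε : 0 < ε) :
    ∃ (A : Finset M) (T : F →L[ℝ] F) (h : M → ℝ), (∀ x, T (δ x) = h x • δ x) ∧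
      (∀ x, 2 * s ≤ wdist o (insert o (A : Set M)) x → h x = 0) ∧
      ∀ μ ∈ Γ, ‖μ - T μ‖ ≤ ε := by
  by_contra hcon
  push Not at hcon
  have hz : ∀ A : Finset M, infDist o (insert o (A : Set M)) = 0 := fun A =>
    infDist_zero_of_mem (mem_insert _ _)
  choose T1 h1 hT1 hT1h h1one h1zero using fun A : Finset M =>
    exists_bump hδ (insert o (A : Set M)) hs
  choose T2 h2 hT2 hT2h h2one h2zero using fun A : Finset M =>
    exists_bump hδ (insert o (A : Set M)) (half_pos hs)
  simp only [hz, add_zero] at hT1 hT2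
  choose μ hμΓ hμ using fun A : Finset M => hcon A (T1 A) (h1 A) (hT1h A) (h1zero A)
  choose f hf hf' using fun A : Finset M => exists_dual_vector'' ℝ (μ A - T1 A (μ A))
  set C : ℝ := 1 + 2 / (s / 2) with hCdef
  have hC0 : 0 < C := by positivity
  have hT1C : ∀ A, ‖T1 A‖ ≤ C := fun A => (hT1 A).trans (by
    rw [hCdef]; gcongr; linarith)
  set η : ℝ := ε / (2 * ((1 + C) * (1 + C))) with hηdef
  have hη : 0 < η := by positivity
  have happ : ∀ A : Finset M, ∃ A' : Finset M, A ⊆ A' ∧ ∃ ν : F, ‖μ A - ν‖ ≤ η ∧ T2 A' ν = ν := by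
    intro A
    obtain ⟨ν, hν, hd⟩ := hδ.dense_span.exists_dist_lt (μ A) hη
    obtain ⟨c, rfl⟩ := Finsupp.mem_span_range_iff_exists_finsupp.1 hν
    refine ⟨A ∪ c.support, Finset.subset_union_left, _, by rw [← dist_eq_norm]; exact hd.le, ?_⟩
    rw [Finsupp.sum, map_sum]
    refine Finset.sum_congr rfl fun x hx => ?_
    rw [map_smul, hT2h, h2one, one_smul]
    rw [wdist_mem]
    · positivity
    · right
      exact_mod_cast Finset.mem_union_right _ hx
  choose nxt hsub ν hν hνT using happ
  let g0 : Finset M → (F →L[ℝ] ℝ) := fun A =>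
    ((f A).comp (ContinuousLinearMap.id ℝ F - T1 A)).comp (T2 (nxt A))
  have hid : ∀ A, ‖ContinuousLinearMap.id ℝ F - T1 A‖ ≤ 1 + C := fun A =>
    (norm_sub_le _ _).trans (add_le_add ContinuousLinearMap.norm_id_le (hT1C A))
  have hfid : ∀ A, ‖(f A).comp (ContinuousLinearMap.id ℝ F - T1 A)‖ ≤ 1 + C := fun A => by
    refine (ContinuousLinearMap.opNorm_comp_le _ _).trans ?_
    have := mul_le_mul (hf A) (hid A) (norm_nonneg _) zero_le_one
    linarith
  have hg0 : ∀ A, ‖g0 A‖ ≤ (1 + C) * C := fun A => by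
    refine (ContinuousLinearMap.opNorm_comp_le _ _).trans ?_
    exact mul_le_mul (hfid A) (hT2 _) (norm_nonneg _) (by positivity)
  have hval : ∀ A x, g0 A (δ x) = h2 (nxt A) x * ((1 - h1 A x) * f A (δ x)) := by
    intro A x
    simp only [g0, ContinuousLinearMap.comp_apply, hT2h, map_smul, sub_apply,
      ContinuousLinearMap.id_apply, hT1h, map_sub, smul_eq_mul]
    ring
  have hbig : ∀ A, ε / 2 < |g0 A (μ A)| := by
    intro A
    have e1 : (f A).comp (ContinuousLinearMap.id ℝ F - T1 A) (μ A) = ‖μ A - T1 A (μ A)‖ := by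
      simpa using hf' A
    have e2 : ‖μ A - T2 (nxt A) (μ A)‖ ≤ (1 + C) * η := by
      have e : μ A - T2 (nxt A) (μ A) = (μ A - ν A) - T2 (nxt A) (μ A - ν A) := by
        rw [map_sub, hνT]; abel
      rw [e]
      refine (norm_sub_le _ _).trans ?_
      have h3 := (T2 (nxt A)).le_of_opNorm_le (hT2 _) (μ A - ν A)
      have h4 := mul_le_mul_of_nonneg_left (hν A) hC0.le
      have h5 := hν A
      linarith
    have e3 : |(f A).comp (ContinuousLinearMap.id ℝ F - T1 A) (μ A - T2 (nxt A) (μ A))| ≤ ε / 2 := by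
      rw [← Real.norm_eq_abs]
      refine (ContinuousLinearMap.le_of_opNorm_le _ (hfid A) _).trans ?_
      refine (mul_le_mul_of_nonneg_left e2 (by positivity)).trans (le_of_eq ?_)
      rw [hηdef]
      field_simp
    rw [map_sub, e1] at e3
    have h6 := hμ A
    have h7 := (abs_le.1 e3).2
    have h8 : g0 A (μ A) = (f A).comp (ContinuousLinearMap.id ℝ F - T1 A) (T2 (nxt A) (μ A)) := rfl
    rw [← h8] at h7
    exact lt_of_lt_of_le (by linarith) (le_abs_self _)
  obtain ⟨sq, hsq⟩ : ∃ sq : ℕ → Finset M, ∀ n, sq (n + 1) = nxt (sq n) :=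
    ⟨fun n => Nat.rec ∅ (fun _ A => nxt A) n, fun n => rfl⟩
  have hmono : Monotone sq := monotone_nat_of_le_succ fun n => by
    rw [hsq]; exact hsub (sq n)
  have hdis : ∀ m n, m < n → ∀ x, g0 (sq m) (δ x) = 0 ∨ g0 (sq n) (δ x) = 0 := by
    intro m n hmn x
    rw [hval, hval]
    by_cases hx : s ≤ wdist o (insert o ((sq (m + 1) : Finset M) : Set M)) x
    · left
      rw [h2zero _ _ (by rw [← hsq]; linarith), zero_mul]
    · right
      have : wdist o (insert o ((sq n : Finset M) : Set M)) x ≤ s := by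
        refine (wdist_anti o (insert_nonempty _ _)
          (insert_subset_insert (Finset.coe_subset.2 (hmono (Nat.succ_le_of_lt hmn)))) x).trans ?_
        push Not at hx
        exact hx.le
      rw [h1one _ _ this]
      simp
  have hw : IsWUC (fun n => g0 (sq n)) := by
    refine wuc_of_disjoint hδ _ (C := (1 + C) * C) (fun n => hg0 _) fun m n hmn x => ?_
    rcases lt_or_gt_of_ne hmn with h | h
    · exact hdis m n h x
    · exact (hdis n m h x).symm
  obtain ⟨n, hn⟩ := (hΓ _ hw (ε / 2) (half_pos hε)).exists
  exact absurd (hn _ (hμΓ (sq n))) (not_le.2 (hbig (sq n)))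

theorem ultra_conv [CompleteSpace M] (l : Ultrafilter M) (A : ℕ → Finset M)
    (h : ∀ n : ℕ, {x | wdist o (insert o (A n : Set M)) x < 2 * (1 / (4 * ((n : ℝ) + 1)))} ∈ l) :
    ∃ x, (l : Filter M) ≤ 𝓝 x := by
  have hnear : ∀ (n : ℕ) (r : ℝ) (x : M), wdist o (insert o (A n : Set M)) x < r →
      ∃ a ∈ insert o (A n : Set M), dist x a < r * (1 + dist x o) := by
    intro n r x hx
    unfold wdist at hx
    rw [div_lt_iff₀ (by positivity)] at hx
    exact (infDist_lt_iff (insert_nonempty _ _)).1 hx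
  have hbd : ∃ R : ℝ, 0 ≤ R ∧ {x | dist x o ≤ R} ∈ l := by
    obtain ⟨R, hR⟩ := ((A 0).finite_toSet.insert o).isBounded.subset_closedBall o
    refine ⟨max 0 (2 * R + 1), le_max_left _ _, mem_of_superset (h 0) fun x hx => ?_⟩
    obtain ⟨a, ha, hxa⟩ := hnear 0 _ x hx
    have h1 : dist a o ≤ R := hR ha
    have h2 := dist_triangle x a o
    norm_num at hxa
    have h3 : dist x o ≤ 2 * R + 1 := by linarith
    exact h3.trans (le_max_right _ _)
  obtain ⟨R, hR0, hR⟩ := hbd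
  apply CompleteSpace.complete
  rw [Metric.cauchy_iff]
  refine ⟨l.neBot, fun ε hε => ?_⟩
  obtain ⟨n, hn⟩ := exists_nat_gt ((1 + R) / ε)
  have hU : ⋃ a ∈ insert o (A n : Set M), ball a (ε / 2) ∈ l := by
    refine mem_of_superset (inter_mem (h n) hR) fun x hx => ?_
    obtain ⟨a, ha, hxa⟩ := hnear n _ x hx.1
    refine mem_biUnion ha (mem_ball.2 (hxa.trans_le ?_))
    have hx2 : dist x o ≤ R := hx.2
    rw [div_lt_iff₀ hε] at hn
    have : 2 * (1 / (4 * ((n : ℝ) + 1))) * (1 + dist x o) = (1 + dist x o) / (2 * ((n : ℝ) + 1)) := by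
      field_simp; norm_num
    rw [this, div_le_iff₀ (by positivity)]
    nlinarith
  obtain ⟨a, -, ha⟩ := (Ultrafilter.finite_biUnion_mem_iff ((A n).finite_toSet.insert o)).1 hU
  refine ⟨_, ha, fun x hx y hy => ?_⟩
  have := dist_triangle_right x y a
  linarith [mem_ball.1 hx, mem_ball.1 hy]

open Classical in
theorem finite_cover [CompleteSpace M] (A : ℕ → Finset M) (V : M → Set M) (hV : ∀ x, V x ∈ 𝓝 x) :
    ∃ (k : ℕ) (t : Finset M), ∀ x,
      (∀ n < k, wdist o (insert o (A n : Set M)) x < 2 * (1 / (4 * ((n : ℝ) + 1)))) →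
        ∃ y ∈ t, x ∈ V y := by
  by_contra hcon
  push Not at hcon
  let f : Filter M :=
    { sets := {E | ∃ (k : ℕ) (t : Finset M), ∀ x,
        (∀ n < k, wdist o (insert o (A n : Set M)) x < 2 * (1 / (4 * ((n : ℝ) + 1)))) →
        (∀ y ∈ t, x ∉ V y) → x ∈ E}
      univ_sets := ⟨0, ∅, by simp⟩
      sets_of_superset := by
        rintro E E' ⟨k, t, h⟩ hE
        exact ⟨k, t, fun x h1 h2 => hE (h x h1 h2)⟩
      inter_sets := by
        rintro E E' ⟨k, t, h⟩ ⟨k', t', h'⟩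
        refine ⟨max k k', t ∪ t', fun x h1 h2 => ⟨h x (fun n hn => h1 n (lt_max_of_lt_left hn))
          (fun y hy => h2 y (Finset.mem_union_left _ hy)),
          h' x (fun n hn => h1 n (lt_max_of_lt_right hn))
          (fun y hy => h2 y (Finset.mem_union_right _ hy))⟩⟩ }
  have hf : NeBot f := by
    rw [neBot_iff]
    intro hbot
    have : ∅ ∈ f := by rw [hbot]; exact mem_bot
    obtain ⟨k, t, h⟩ := this
    obtain ⟨x, hx1, hx2⟩ := hcon k t
    exact h x hx1 hx2
  have hu := Ultrafilter.of_le f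
  obtain ⟨x, hx⟩ := ultra_conv (o := o) (Ultrafilter.of f) A (fun n => hu
    ⟨n + 1, ∅, fun x h _ => h n (Nat.lt_succ_self n)⟩)
  have h1 : V x ∈ Ultrafilter.of f := hx (hV x)
  have h2 : (V x)ᶜ ∈ Ultrafilter.of f := hu ⟨0, {x}, fun y _ h => h x (by simp)⟩
  exact Ultrafilter.compl_mem_iff_notMem.1 h2 h1

theorem good_bump [CompleteSpace F] (hδ : IsLipschitzFree o δ) {x : M} {U : Set M} (hU : U ∈ 𝓝 x) :
    ∃ (V : Set M) (T : F →L[ℝ] F) (h : M → ℝ), V ∈ 𝓝 x ∧ (∀ y, T (δ y) = h y • δ y) ∧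
      (∀ y ∈ V, h y = 1) ∧ (∀ y, y ∉ U → h y = 0) := by
  obtain ⟨r, hr, hrU⟩ := Metric.mem_nhds_iff.1 hU
  obtain ⟨s, hs, hs4, hsr⟩ : ∃ s : ℝ, 0 < s ∧ s ≤ 1 / 4 ∧ 4 * s * (1 + dist x o) ≤ r := by
    refine ⟨min (1 / 4) (r / (4 * (1 + dist x o))), by positivity, min_le_left _ _, ?_⟩
    have := min_le_right (1 / 4) (r / (4 * (1 + dist x o)))
    rw [le_div_iff₀ (by positivity)] at this
    linarith
  obtain ⟨T, h, -, h1, h2, h3⟩ := exists_bump hδ {x} hs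
  have hw : ∀ y, wdist o {x} y = dist y x / (1 + dist y o) := fun y => by
    simp [wdist]
  refine ⟨ball x s, T, h, ball_mem_nhds x hs, h1, fun y hy => h2 y ?_, fun y hy => h3 y ?_⟩
  · rw [hw, div_le_iff₀ (by positivity)]
    have := mem_ball.1 hy
    nlinarith [dist_nonneg (x := y) (y := o)]
  · rw [hw, le_div_iff₀ (by positivity)]
    have h4 : r ≤ dist y x := by
      by_contra hc
      push Not at hc
      exact hy (hrU (mem_ball.2 hc))
    have := dist_triangle y x o
    nlinarith

theorem freeSpan_range (hδ : IsLipschitzFree o δ) {T : F →L[ℝ] F} {h : M → ℝ} {S : Set M}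
    (hT : ∀ y, T (δ y) = h y • δ y) (hS : ∀ y, y ∉ S → h y = 0) (μ : F) :
    T μ ∈ freeSpan δ S := by
  have hcl : IsClosed ((freeSpan δ S : Submodule ℝ F) : Set F) :=
    Submodule.isClosed_topologicalClosure _
  refine hδ.dense_span.induction (P := fun μ => T μ ∈ freeSpan δ S) ?_ ?_ μ
  · intro ν hν
    induction hν using Submodule.span_induction with
    | mem y hy =>
      obtain ⟨x, rfl⟩ := hy
      rw [hT]
      by_cases hx : x ∈ S
      · exact Submodule.smul_mem _ _ (mem_freeSpan δ hx)
      · rw [hS x hx, zero_smul]; exact Submodule.zero_mem _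
    | zero => rw [map_zero]; exact Submodule.zero_mem _
    | add a b _ _ ha hb => rw [map_add]; exact Submodule.add_mem _ ha hb
    | smul c a _ ha => rw [map_smul]; exact Submodule.smul_mem _ _ ha
  · exact hcl.preimage T.continuous

/-- `x` has a neighbourhood bump `(V, T, h)` with `T` mapping (V*)-sets to rel. weakly compact sets. -/
theorem good_bump_rwc [CompleteSpace F] (hδ : IsLipschitzFree o δ)
    (hloc : ∀ x : M, ∃ U ∈ 𝓝 x, HasPropertyVStar ↥(freeSpan δ (closure U ∪ {o}))) (x : M) :
    ∃ (V : Set M) (T : F →L[ℝ] F) (h : M → ℝ), V ∈ 𝓝 x ∧ (∀ y, T (δ y) = h y • δ y) ∧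
      (∀ y ∈ V, h y = 1) ∧ (∀ Γ : Set F, IsVStarSet Γ → RelWeaklyCompact (T '' Γ)) := by
  obtain ⟨U, hU, hUV⟩ := hloc x
  obtain ⟨V, T, h, hV, hT, h1, h0⟩ := good_bump hδ hU
  refine ⟨V, T, h, hV, hT, h1, fun Γ hΓ => ?_⟩
  have hr : ∀ μ, T μ ∈ freeSpan δ (closure U ∪ {o}) := freeSpan_range hδ hT fun y hy =>
    h0 y fun hyU => hy (Or.inl (subset_closure hyU))
  have h2 := hUV _ (vstar_image (T.codRestrict _ hr) hΓ)
  have h3 := rwc_image (freeSpan δ (closure U ∪ {o})).subtypeL h2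
  rw [← image_comp] at h3
  exact h3

open Classical in
theorem partition_rwc {M : Type*} {δ : M → F} {V : M → Set M} {T : M → F →L[ℝ] F} {h : M → M → ℝ}
    (hT : ∀ x y, T x (δ y) = h x y • δ y) (h1 : ∀ x, ∀ y ∈ V x, h x y = 1)
    (hV : ∀ x, ∀ Γ : Set F, IsVStarSet Γ → RelWeaklyCompact (T x '' Γ))
    {Γ : Set F} (hΓ : IsVStarSet Γ) (t : Finset M) :
    ∃ (Q : F →L[ℝ] F) (c : M → ℝ), (∀ y, Q (δ y) = c y • δ y) ∧
      (∀ x ∈ t, ∀ y ∈ V x, c y = 0) ∧ RelWeaklyCompact ((fun μ => μ - Q μ) '' Γ) := by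
  induction t using Finset.induction_on with
  | empty =>
    refine ⟨ContinuousLinearMap.id ℝ F, fun _ => 1, by simp, by simp, ?_⟩
    rw [rwc_iff]
    intro l hl
    refine ⟨0, fun φ => ?_⟩
    rw [map_zero]
    refine tendsto_const_nhds.congr' ?_
    filter_upwards [hl] with y hy
    obtain ⟨x, -, rfl⟩ := hy
    simp
  | insert a t _ ih =>
    obtain ⟨Q, c, hQ, hc, hR⟩ := ih
    refine ⟨(ContinuousLinearMap.id ℝ F - T a).comp Q, fun y => (1 - h a y) * c y, ?_, ?_, ?_⟩
    · intro y
      simp only [ContinuousLinearMap.comp_apply, hQ, map_smul, sub_apply,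
        ContinuousLinearMap.id_apply, hT]
      module
    · intro x hx y hy
      rcases Finset.mem_insert.1 hx with rfl | hx
      · simp [h1 x y hy]
      · simp [hc x hx y hy]
    · refine rwc_add hR (hV a _ (vstar_image Q hΓ)) ?_
      rintro _ ⟨μ, hμ, rfl⟩
      refine ⟨_, ⟨μ, hμ, rfl⟩, _, ⟨Q μ, ⟨μ, hμ, rfl⟩, rfl⟩, ?_⟩
      simp only [ContinuousLinearMap.comp_apply, sub_apply, ContinuousLinearMap.id_apply]
      abel

theorem iterate_tight [CompleteSpace F] (hδ : IsLipschitzFree o δ) {Γ : Set F} (hΓ : IsVStarSet Γ)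
    {ε : ℝ} (hε : 0 < ε) :
    ∃ (A : ℕ → Finset M) (P : ℕ → F →L[ℝ] F) (H : ℕ → M → ℝ), (∀ k x, P k (δ x) = H k x • δ x) ∧
      (∀ (k : ℕ) x, (∃ n : ℕ, n < k ∧ 2 * (1 / (4 * ((n : ℝ) + 1))) ≤ wdist o (insert o (A n : Set M)) x) →
        H k x = 0) ∧
      ∀ k, ∀ μ ∈ Γ, ‖μ - P k μ‖ ≤ ε := by
  choose A T h hT h0 hA using fun (n : ℕ) (P : F →L[ℝ] F) =>
    vstar_tight hδ (vstar_image P hΓ) (s := 1 / (4 * ((n : ℝ) + 1))) (ε := ε * (1 / 2) ^ (n + 1))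
      (by positivity) (by positivity)
  let P : ℕ → F →L[ℝ] F := fun k =>
    Nat.rec (ContinuousLinearMap.id ℝ F) (fun n P => (T n P).comp P) k
  have hP : ∀ k, P (k + 1) = (T k (P k)).comp (P k) := fun k => rfl
  let H : ℕ → M → ℝ := fun k x => ∏ n ∈ Finset.range k, h n (P n) x
  refine ⟨fun n => A n (P n), P, H, ?_, ?_, ?_⟩
  · intro k x
    induction k with
    | zero => simp [P, H]
    | succ k ih =>
      rw [hP, ContinuousLinearMap.comp_apply, ih, map_smul, hT, smul_smul]
      simp only [H, Finset.prod_range_succ]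
  · rintro k x ⟨n, hn, hx⟩
    exact Finset.prod_eq_zero (Finset.mem_range.2 hn) (h0 n (P n) x hx)
  · intro k μ hμ
    have : ‖μ - P k μ‖ ≤ ε * (1 - (1 / 2) ^ k) := by
      induction k with
      | zero => simp [P]
      | succ k ih =>
        have h2 := hA k (P k) (P k μ) ⟨μ, hμ, rfl⟩
        have e : μ - P (k + 1) μ = (μ - P k μ) + (P k μ - T k (P k) (P k μ)) := by
          rw [hP, ContinuousLinearMap.comp_apply]; abel
        rw [e]
        refine (norm_add_le _ _).trans ?_
        rw [pow_succ] at h2 ⊢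
        linarith
    refine this.trans ?_
    have : (0 : ℝ) < (1 / 2) ^ k := by positivity
    nlinarith

end Main

/-- **Property (V*) is locally determined for Lipschitz-free spaces.**
If `M` is a complete pointed metric space such that every point `x ∈ M` has a
neighborhood `U` for which the Lipschitz-free space `F(cl(U) ∪ {0})` has property (V*),
then `F(M)` has property (V*). -/
theorem locallyDetermined_propertyVStar
    {M : Type*} [MetricSpace M] [CompleteSpace M] (o : M)
    {F : Type*} [NormedAddCommGroup F] [NormedSpace ℝ F] [CompleteSpace F]
    (δ : M → F) (hδ : IsLipschitzFree o δ)
    (hloc : ∀ x : M, ∃ U ∈ 𝓝 x, HasPropertyVStar ↥(freeSpan δ (closure U ∪ {o}))) :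
    HasPropertyVStar F := by
  intro Γ hΓ
  refine rwc_of_approx fun ε hε => ?_
  obtain ⟨A, P, H, hP, hH, hPε⟩ := iterate_tight hδ hΓ hε
  choose V T h hV hT h1 hR using good_bump_rwc hδ hloc
  obtain ⟨k, t, hk⟩ := finite_cover (o := o) A V hV
  obtain ⟨Q, c, hQ, hc, hW⟩ := partition_rwc hT h1 hR (vstar_image (P k) hΓ) t
  have hQP : Q.comp (P k) = 0 := by
    refine free_ext hδ fun x => ?_
    rw [ContinuousLinearMap.comp_apply, hP, map_smul, hQ, smul_smul,
      zero_apply]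
    by_cases hx : ∃ n < k, 2 * (1 / (4 * ((n : ℝ) + 1))) ≤ wdist o (insert o (A n : Set M)) x
    · rw [hH k x hx, zero_mul, zero_smul]
    · push Not at hx
      obtain ⟨y, hy, hxy⟩ := hk x hx
      rw [hc y hy x hxy, mul_zero, zero_smul]
  refine ⟨_, hW, fun μ hμ => ⟨P k μ, ⟨P k μ, ⟨μ, hμ, rfl⟩, ?_⟩, hPε k μ hμ⟩⟩
  have := congrArg (fun S => S μ) hQP
  simp only [ContinuousLinearMap.comp_apply, zero_apply] at this
  simp [this]
end
end

section
/- If M is a complete, locally compact, purely 1-unrectifiable pointed metric space, then the Lipschitz-free space F(M) has property (V*). -/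
open Filter Topology Metric Set

noncomputable section

/-- A metric space is purely 1-unrectifiable if it contains no bi-Lipschitz copy of a
subset of `ℝ` of positive Lebesgue measure. -/
def Purely1Unrectifiable (M : Type*) [MetricSpace M] : Prop :=
  ¬ ∃ (A : Set ℝ) (f : ℝ → M) (c C : ℝ), 0 < MeasureTheory.volume A ∧ 0 < c ∧
      ∀ x ∈ A, ∀ y ∈ A,
        c * |x - y| ≤ dist (f x) (f y) ∧ dist (f x) (f y) ≤ C * |x - y|


section Helpers
open MeasureTheory

theorem volume_image_zero_of_lip {h : ℝ → ℝ} (hh : LipschitzWith 1 h) {s : Set ℝ}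
    (hs : volume s = 0) : volume (h '' s) = 0 := by
  have := (hh.lipschitzOnWith (s := s)).hausdorffMeasure_image_le (d := 1) zero_le_one
  rw [hausdorffMeasure_real] at this
  simpa [hs] using this

theorem rect_null {M : Type*} [MetricSpace M] (hM : Purely1Unrectifiable M)
    (T : Set ℝ) (γ : ℝ → M) (hγ : ∀ s ∈ T, ∀ t ∈ T, dist (γ s) (γ t) ≤ |s - t|)
    (f : M → ℝ) (hf : ∀ x y, |f x - f y| ≤ dist x y) :
    volume ((fun t => f (γ t)) '' T) = 0 := by
  have h0 : LipschitzOnWith 1 (fun t => f (γ t)) T := by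
    apply LipschitzOnWith.of_dist_le_mul
    intro s hs t ht
    simp only [NNReal.coe_one, one_mul, Real.dist_eq]
    exact (hf _ _).trans (hγ s hs t ht)
  obtain ⟨h, hh, heq⟩ := h0.extend_real
  have himg : (fun t => f (γ t)) '' T = h '' T := Set.image_congr heq
  rw [himg]
  have hle : ∀ s ∈ T, ∀ t ∈ T, |h s - h t| ≤ dist (γ s) (γ t) := by
    intro s hs t ht
    rw [← heq hs, ← heq ht]
    exact hf _ _
  set D : ℕ → Set ℝ := fun n => {t | ∀ s, |s - t| ≤ 1 / ((n : ℝ) + 1) →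
    1 / ((n : ℝ) + 1) * |s - t| ≤ |h s - h t|} with hD
  have hDn : ∀ n, volume (T ∩ D n) = 0 := by
    intro n
    set a : ℝ := 1 / ((n : ℝ) + 1) with ha
    have hapos : 0 < a := by positivity
    have hcov : T ∩ D n ⊆ ⋃ k : ℤ, (T ∩ D n ∩ Set.Ico (k * a) ((k + 1) * a)) := by
      intro t ht
      refine Set.mem_iUnion.2 ⟨⌊t / a⌋, ht, ?_, ?_⟩
      · have := Int.floor_le (t / a)
        rwa [le_div_iff₀ hapos] at this
      · have := Int.lt_floor_add_one (t / a)
        rwa [div_lt_iff₀ hapos] at this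
    refine measure_mono_null hcov (measure_iUnion_null fun k => ?_)
    by_contra hne
    apply hM
    refine ⟨T ∩ D n ∩ Set.Ico (k * a) ((k + 1) * a), γ, a, 1, pos_iff_ne_zero.2 hne, hapos, ?_⟩
    rintro x ⟨⟨hxT, hxD⟩, hx1, hx2⟩ y ⟨⟨hyT, hyD⟩, hy1, hy2⟩
    refine ⟨?_, by simpa using hγ x hxT y hyT⟩
    refine le_trans (hyD x ?_) (hle x hxT y hyT)
    rw [abs_le]; constructor <;> nlinarith
  set N : Set ℝ := {t | ¬ DifferentiableAt ℝ h t} with hN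
  have hNn : volume N = 0 := by
    have := hh.ae_differentiableAt_real
    rwa [ae_iff] at this
  set Z : Set ℝ := {t | DifferentiableAt ℝ h t ∧ deriv h t = 0} with hZ
  have hZn : volume (h '' Z) = 0 := by
    apply addHaar_image_eq_zero_of_det_fderivWithin_eq_zero volume
      (f' := fun _ => 0)
    · rintro x ⟨hx, hx0⟩
      have := hx.hasDerivAt
      rw [hx0] at this
      have h2 := this.hasFDerivAt.hasFDerivWithinAt (s := Z)
      have e : ContinuousLinearMap.toSpanSingleton ℝ (0 : ℝ) = (0 : ℝ →L[ℝ] ℝ) := by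
        ext; simp
      rw [e] at h2
      exact h2
    · intro x _
      simp
  have hcov : T ⊆ (N ∪ ⋃ n, (T ∩ D n)) ∪ Z := by
    intro t ht
    by_cases h1 : DifferentiableAt ℝ h t
    · by_cases h2 : deriv h t = 0
      · exact Or.inr ⟨h1, h2⟩
      · left; right
        have hd := h1.hasDerivAt
        rw [hasDerivAt_iff_isLittleO] at hd
        have hpos : 0 < |deriv h t| / 2 := by positivity
        have hb := hd.bound hpos
        obtain ⟨ε, hε, hb⟩ := Metric.eventually_nhds_iff.1 hb
        obtain ⟨n, hn⟩ := exists_nat_one_div_lt (lt_min hε hpos)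
        refine Set.mem_iUnion.2 ⟨n, ht, ?_⟩
        intro s hs
        have h3 := hb (y := s) (by
          rw [Real.dist_eq]; exact lt_of_le_of_lt hs (hn.trans_le (min_le_left _ _)))
        simp only [Real.norm_eq_abs, smul_eq_mul] at h3
        have h4 : |(s - t) * deriv h t| ≤ |h s - h t| + |h s - h t - (s - t) * deriv h t| := by
          have := abs_sub (h s - h t) (h s - h t - (s - t) * deriv h t)
          have e : h s - h t - (h s - h t - (s - t) * deriv h t) = (s - t) * deriv h t := by ring
          rw [e] at this
          exact this
        rw [abs_mul] at h4
        have h5 := hn.trans_le (min_le_right _ _)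
        have h6 : 1 / ((n : ℝ) + 1) * |s - t| ≤ |deriv h t| / 2 * |s - t| :=
          mul_le_mul_of_nonneg_right h5.le (abs_nonneg _)
        linarith
    · exact Or.inl (Or.inl h1)
  refine measure_mono_null (Set.image_mono hcov) ?_
  rw [Set.image_union]
  refine measure_union_null ?_ hZn
  apply volume_image_zero_of_lip hh
  exact measure_union_null hNn (measure_iUnion_null hDn)

theorem uIcc_chain (a : ℕ → ℝ) (N : ℕ) :
    Set.uIcc (a 0) (a N) ⊆ {a 0} ∪ ⋃ i ∈ Finset.range N, Set.uIcc (a i) (a (i + 1)) := by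
  induction N with
  | zero => simp
  | succ n ih =>
    refine Set.uIcc_subset_uIcc_union_uIcc (b := a n) |>.trans ?_
    rintro v (hv | hv)
    · rcases ih hv with h | h
      · exact Or.inl h
      · right
        simp only [Set.mem_iUnion, Finset.mem_range] at h ⊢
        obtain ⟨i, hi, h⟩ := h
        exact ⟨i, by omega, h⟩
    · right
      simp only [Set.mem_iUnion, Finset.mem_range]
      exact ⟨n, by omega, hv⟩

theorem chain_dist {M : Type*} [MetricSpace M] (p : ℕ → M) (i j : ℕ) :
    dist (p i) (p j) ≤ |(∑ k ∈ Finset.range i, dist (p k) (p (k + 1))) -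
      ∑ k ∈ Finset.range j, dist (p k) (p (k + 1))| := by
  wlog hij : i ≤ j generalizing i j
  · rw [dist_comm, abs_sub_comm]
    exact this j i (by omega)
  rw [abs_sub_comm, ← Finset.sum_Ico_eq_sub _ hij]
  exact (dist_le_Ico_sum_dist p hij).trans (le_abs_self _)

theorem chain_lemma {M : Type*} [MetricSpace M] (hM : Purely1Unrectifiable M)
    {K : Set M} (hK : IsCompact K) (f : M → ℝ) (hf : ∀ x y, |f x - f y| ≤ dist x y)
    (L ε : ℝ) (hε : 0 < ε) :
    ∃ d > (0 : ℝ), ∀ (N : ℕ) (p : ℕ → M), (∀ i, p i ∈ K) →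
      ∑ i ∈ Finset.range N, dist (p i) (p (i + 1)) ≤ L →
      |f (p N) - f (p 0)| - ε ≤ ∑ i ∈ Finset.range N,
        if dist (p i) (p (i + 1)) < d then 0 else dist (p i) (p (i + 1)) := by
  by_contra hcon
  push Not at hcon
  have hcon' : ∀ n : ℕ, ∃ (N : ℕ) (p : ℕ → M), (∀ i, p i ∈ K) ∧
      ∑ i ∈ Finset.range N, dist (p i) (p (i + 1)) ≤ L ∧
      ∑ i ∈ Finset.range N,
        (if dist (p i) (p (i + 1)) < 1 / ((n : ℝ) + 1) then 0 else dist (p i) (p (i + 1)))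
        < |f (p N) - f (p 0)| - ε := fun n => hcon _ (by positivity)
  choose N p hpK hpL hlt using hcon'
  set t : ℕ → ℕ → ℝ := fun n i => ∑ k ∈ Finset.range i, dist (p n k) (p n (k + 1)) with ht
  have htd : ∀ n i j, dist (p n i) (p n j) ≤ |t n i - t n j| := fun n i j => chain_dist _ _ _
  have ht0 : ∀ n i, 0 ≤ t n i := fun n i => Finset.sum_nonneg fun _ _ => dist_nonneg
  have htL : ∀ n i, i ≤ N n → t n i ≤ L := fun n i hi =>
    le_trans (Finset.sum_le_sum_of_subset_of_nonneg (Finset.range_mono hi)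
      fun _ _ _ => dist_nonneg) (hpL n)
  set U : Ultrafilter ℕ := Filter.hyperfilter ℕ with hU
  set Q : Set (ℝ × M) := Set.Icc 0 L ×ˢ K with hQ
  have hQc : IsCompact Q := isCompact_Icc.prod hK
  set G : Set (ℝ × M) := {z | ∀ r > (0 : ℝ), ∀ᶠ n in (U : Filter ℕ), ∃ i ≤ N n,
    dist (t n i, p n i) z < r} with hG
  have hmemQ : ∀ n i, i ≤ N n → (t n i, p n i) ∈ Q := fun n i hi =>
    ⟨⟨ht0 n i, htL n i hi⟩, hpK n i⟩
  have hGQ : G ⊆ Q := by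
    intro z hz
    rw [← hQc.isClosed.closure_eq, Metric.mem_closure_iff]
    intro r hr
    obtain ⟨n, i, hi, h⟩ := (hz r hr).exists
    exact ⟨_, hmemQ n i hi, by rwa [dist_comm]⟩
  have hGcl : IsClosed G := by
    rw [← closure_subset_iff_isClosed]
    intro z hz r hr
    obtain ⟨w, hw, hzw⟩ := Metric.mem_closure_iff.1 hz (r / 2) (by positivity)
    filter_upwards [hw (r / 2) (by positivity)] with n hn
    obtain ⟨i, hi, h⟩ := hn
    refine ⟨i, hi, ?_⟩
    have := dist_triangle (t n i, p n i) w z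
    rw [dist_comm w z] at this
    linarith
  have hGc : IsCompact G := hQc.of_isClosed_subset hGcl hGQ
  have hG1 : ∀ z ∈ G, ∀ w ∈ G, dist z.2 w.2 ≤ |z.1 - w.1| := by
    intro z hz w hw
    apply le_of_forall_pos_le_add
    intro r hr
    obtain ⟨n, ⟨i, hi, h1⟩, ⟨j, hj, h2⟩⟩ :=
      ((hz (r / 4) (by positivity)).and (hw (r / 4) (by positivity))).exists
    rw [Prod.dist_eq, max_lt_iff] at h1 h2
    simp only [Real.dist_eq] at h1 h2
    have h3 := htd n i j
    have h4 := dist_triangle4 z.2 (p n i) (p n j) w.2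
    rw [dist_comm z.2 (p n i)] at h4
    have h5 : |t n i - t n j| ≤ |t n i - z.1| + |z.1 - w.1| + |t n j - w.1| := by
      have e : t n i - t n j = (t n i - z.1) + (z.1 - w.1) - (t n j - w.1) := by ring
      rw [e]
      exact (abs_sub _ _).trans (by gcongr; exact abs_add_le _ _)
    linarith [h1.1, h1.2, h2.1, h2.2]
  have hG2 : ∀ s > (0 : ℝ), ∀ᶠ n in (U : Filter ℕ), ∀ i ≤ N n, ∃ z ∈ G,
      dist (t n i, p n i) z < s := by
    intro s hs
    by_contra hne
    rw [← Ultrafilter.eventually_not] at hne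
    have hex : ∀ n, ∃ i, i ≤ N n ∧ ((¬ ∀ i ≤ N n, ∃ z ∈ G, dist (t n i, p n i) z < s) →
        ∀ z ∈ G, s ≤ dist (t n i, p n i) z) := by
      intro n
      by_cases h : ∀ i ≤ N n, ∃ z ∈ G, dist (t n i, p n i) z < s
      · exact ⟨0, Nat.zero_le _, fun h' => absurd h h'⟩
      · have h' := h
        push Not at h
        obtain ⟨i, hi, h⟩ := h
        exact ⟨i, hi, fun _ => h⟩
    choose i hi hi2 using hex
    have hm : Q ∈ U.map (fun n => (t n (i n), p n (i n))) := by
      rw [Ultrafilter.mem_map]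
      exact Filter.Eventually.of_forall fun n => hmemQ n (i n) (hi n)
    obtain ⟨z, hzQ, hz⟩ := hQc.ultrafilter_le_nhds _ (Filter.le_principal_iff.2 hm)
    have hz' : Tendsto (fun n => (t n (i n), p n (i n))) (U : Filter ℕ) (𝓝 z) := hz
    have hzr : ∀ r > (0 : ℝ), ∀ᶠ n in (U : Filter ℕ), dist (t n (i n), p n (i n)) z < r :=
      fun r hr => Metric.tendsto_nhds.1 hz' r hr
    have hzG : z ∈ G := by
      intro r hr
      filter_upwards [hzr r hr] with n hn
      exact ⟨i n, hi n, hn⟩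
    obtain ⟨n, h1, h2⟩ := ((hzr s hs).and hne).exists
    exact absurd (hi2 n h2 z hzG) (not_le.2 h1)
  set S : Set ℝ := (fun z : ℝ × M => f z.2) '' G with hS
  have hfc : Continuous f := by
    apply LipschitzWith.continuous (K := 1)
    apply LipschitzWith.of_dist_le_mul
    intro x y
    simpa [Real.dist_eq] using hf x y
  have hSc : IsCompact S := hGc.image (hfc.comp continuous_snd)
  have hS0 : volume S = 0 := by
    classical
    set γ : ℝ → M := fun s => if h : ∃ x, (s, x) ∈ G then h.choose else p 0 0 with hγ
    have hγG : ∀ s ∈ Prod.fst '' G, (s, γ s) ∈ G := by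
      rintro s ⟨z, hz, rfl⟩
      have h : ∃ x, (z.1, x) ∈ G := ⟨z.2, hz⟩
      simp only [hγ, dif_pos h]
      exact h.choose_spec
    have := rect_null hM (Prod.fst '' G) γ
      (fun s hs s' hs' => hG1 _ (hγG s hs) _ (hγG s' hs')) f hf
    refine measure_mono_null ?_ this
    rintro _ ⟨z, hz, rfl⟩
    refine ⟨z.1, ⟨z, hz, rfl⟩, ?_⟩
    have h1 := hG1 _ hz _ (hγG z.1 ⟨z, hz, rfl⟩)
    simp only [sub_self, abs_zero] at h1
    have h2 := dist_le_zero.1 h1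
    simp only
    rw [← h2]
  have hthick := tendsto_measure_cthickening_of_isCompact (μ := volume) hSc
  rw [hS0] at hthick
  have hev := hthick.eventually (gt_mem_nhds (ENNReal.ofReal_pos.2 hε))
  obtain ⟨s0, hs0, hev⟩ := Metric.eventually_nhds_iff.1 hev
  set s := s0 / 2 with hsdef
  have hs : 0 < s := by positivity
  have hvs : volume (Metric.cthickening s S) < ENNReal.ofReal ε := by
    apply hev
    rw [Real.dist_eq, sub_zero, abs_of_pos hs]
    linarith
  have hsmall : ∀ᶠ n : ℕ in (U : Filter ℕ), 1 / ((n : ℝ) + 1) < s / 2 := by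
    have : (U : Filter ℕ) ≤ atTop := Nat.hyperfilter_le_atTop
    apply this
    exact (tendsto_one_div_add_atTop_nhds_zero_nat (𝕜 := ℝ)).eventually
      (gt_mem_nhds (by positivity))
  obtain ⟨n, hn1, hn2⟩ := ((hG2 (s / 2) (by positivity)).and hsmall).exists
  have hnear : ∀ i ≤ N n, ∀ v : ℝ, |v - f (p n i)| ≤ s / 2 → v ∈ Metric.cthickening s S := by
    intro i hi v hv
    obtain ⟨z, hz, hd⟩ := hn1 i hi
    rw [Prod.dist_eq, max_lt_iff] at hd
    apply Metric.mem_cthickening_of_dist_le v (f z.2) s S ⟨z, hz, rfl⟩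
    have h1 := dist_triangle v (f (p n i)) (f z.2)
    rw [Real.dist_eq v (f (p n i)), Real.dist_eq (f (p n i))] at h1
    have h2 := hf (p n i) z.2
    have h3 : dist (p n i) z.2 < s / 2 := hd.2
    linarith
  have hcov : Set.uIcc (f (p n 0)) (f (p n (N n))) ⊆ Metric.cthickening s S ∪
      ⋃ i ∈ Finset.range (N n), (if dist (p n i) (p n (i + 1)) < 1 / ((n : ℝ) + 1) then ∅
        else Set.uIcc (f (p n i)) (f (p n (i + 1)))) := by
    refine (uIcc_chain (fun i => f (p n i)) (N n)).trans ?_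
    rintro v (hv | hv)
    · left
      apply hnear 0 (Nat.zero_le _)
      rw [Set.mem_singleton_iff.1 hv]
      simp only [sub_self, abs_zero]
      positivity
    · simp only [Set.mem_iUnion, Finset.mem_range] at hv
      obtain ⟨i, hi, hv⟩ := hv
      by_cases hd : dist (p n i) (p n (i + 1)) < 1 / ((n : ℝ) + 1)
      · left
        apply hnear i hi.le
        have h1 := Set.abs_sub_left_of_mem_uIcc hv
        have h2 := hf (p n (i + 1)) (p n i)
        rw [dist_comm] at h2
        linarith
      · right
        simp only [Set.mem_iUnion, Finset.mem_range]
        refine ⟨i, hi, ?_⟩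
        rw [if_neg hd]
        exact hv
  have hmeas := (measure_mono (μ := volume) hcov).trans ((measure_union_le _ _).trans
    (add_le_add le_rfl (measure_biUnion_finset_le _ _)))
  have hb : ∑ i ∈ Finset.range (N n), volume
      (if dist (p n i) (p n (i + 1)) < 1 / ((n : ℝ) + 1) then ∅
        else Set.uIcc (f (p n i)) (f (p n (i + 1)))) ≤ ENNReal.ofReal
      (∑ i ∈ Finset.range (N n),
        (if dist (p n i) (p n (i + 1)) < 1 / ((n : ℝ) + 1) then 0
          else dist (p n i) (p n (i + 1)))) := by
    rw [ENNReal.ofReal_sum_of_nonneg]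
    · apply Finset.sum_le_sum
      intro i _
      split_ifs
      · simp
      · rw [Real.volume_interval]
        apply ENNReal.ofReal_le_ofReal
        rw [dist_comm]
        exact hf _ _
    · intro i _
      split_ifs
      · exact le_rfl
      · exact dist_nonneg
  rw [Real.volume_interval] at hmeas
  have hfin := lt_of_le_of_lt (hmeas.trans (add_le_add le_rfl hb))
    (ENNReal.add_lt_add_right ENNReal.ofReal_ne_top hvs)
  rw [← ENNReal.ofReal_add hε.le (Finset.sum_nonneg fun i _ => by
    split_ifs; exacts [le_rfl, dist_nonneg])] at hfin
  have h9 := (ENNReal.ofReal_lt_ofReal_iff_of_nonneg (abs_nonneg _)).1 hfin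
  have h10 := hlt n
  linarith

/-- Flat approximation on compact sets. -/
theorem flat_approx {M : Type*} [MetricSpace M] (hM : Purely1Unrectifiable M)
    {K : Set M} (hK : IsCompact K) (f : M → ℝ) (hf : ∀ x y, |f x - f y| ≤ dist x y)
    (B : ℝ) (hB : ∀ x ∈ K, |f x| ≤ B)
    (η ε : ℝ) (hη : 0 < η) (hη1 : η ≤ 1) (hε : 0 < ε) :
    ∃ d > (0 : ℝ), ∃ g : M → ℝ, (∀ x ∈ K, |f x - g x| ≤ ε) ∧
      (∀ x ∈ K, ∀ y ∈ K, |g x - g y| ≤ dist x y) ∧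
      (∀ x ∈ K, ∀ y ∈ K, dist x y < d → |g x - g y| ≤ η * dist x y) := by
  obtain ⟨d, hd, hchain⟩ := chain_lemma hM hK f hf (2 * B / η) ε hε
  set c : M → M → ℝ := fun x y => if dist x y < d then η * dist x y else dist x y with hc
  have hc0 : ∀ x y, η * dist x y ≤ c x y := by
    intro x y
    simp only [hc]
    split_ifs
    · exact le_rfl
    · nlinarith [dist_nonneg (x := x) (y := y)]
  have hcd : ∀ x y, c x y ≤ dist x y := by
    intro x y
    simp only [hc]
    split_ifs
    · nlinarith [dist_nonneg (x := x) (y := y)]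
    · exact le_rfl
  have hcs : ∀ x y, c x y = c y x := by
    intro x y; simp only [hc, dist_comm]
  have hcpos : ∀ x y, 0 ≤ c x y := fun x y => le_trans (by positivity) (hc0 x y)
  set V : M → Set ℝ := fun x => {v | ∃ (N : ℕ) (p : ℕ → M), (∀ i, p i ∈ K) ∧ p 0 = x ∧
    v = f (p N) + ∑ i ∈ Finset.range N, c (p i) (p (i + 1))} with hV
  have hVlow : ∀ x ∈ K, ∀ v ∈ V x, f x - ε ≤ v := by
    rintro x hx v ⟨N, p, hpK, hp0, rfl⟩
    by_contra hlt
    push Not at hlt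
    have h1 : η * ∑ i ∈ Finset.range N, dist (p i) (p (i + 1)) ≤
        ∑ i ∈ Finset.range N, c (p i) (p (i + 1)) := by
      rw [Finset.mul_sum]
      exact Finset.sum_le_sum fun i _ => hc0 _ _
    have h2 := abs_le.1 (hB x hx)
    have h3 := abs_le.1 (hB (p N) (hpK N))
    have h4 := hchain N p hpK (by
      rw [le_div_iff₀ hη]
      linarith)
    have h5 : ∑ i ∈ Finset.range N,
        (if dist (p i) (p (i + 1)) < d then 0 else dist (p i) (p (i + 1))) ≤
        ∑ i ∈ Finset.range N, c (p i) (p (i + 1)) := by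
      apply Finset.sum_le_sum
      intro i _
      simp only [hc]
      split_ifs
      · positivity
      · exact le_rfl
    rw [hp0] at h4
    have h6 := neg_le_abs (f (p N) - f x)
    linarith
  have hVbdd : ∀ x ∈ K, BddBelow (V x) := fun x hx => ⟨_, fun v hv => hVlow x hx v hv⟩
  have hVf : ∀ x ∈ K, f x ∈ V x := fun x hx => ⟨0, fun _ => x, fun _ => hx, rfl, by simp⟩
  have hstep : ∀ x ∈ K, ∀ y ∈ K, sInf (V x) ≤ c x y + sInf (V y) := by
    intro x hx y hy
    rw [← sub_le_iff_le_add']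
    apply le_csInf ⟨_, hVf y hy⟩
    rintro v ⟨N, p, hpK, hp0, rfl⟩
    rw [sub_le_iff_le_add']
    apply csInf_le (hVbdd x hx)
    refine ⟨N + 1, fun i => Nat.casesOn i x p, ?_, rfl, ?_⟩
    · intro i
      cases i
      · exact hx
      · exact hpK _
    · rw [Finset.sum_range_succ']
      simp only [hp0]
      rw [show c (Nat.rec x (fun n _ => p n) 0 : M) y = c x y from rfl]
      ring
  have hlip : ∀ x ∈ K, ∀ y ∈ K, |sInf (V x) - sInf (V y)| ≤ c x y := by
    intro x hx y hy
    rw [abs_le]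
    have h1 := hstep x hx y hy
    have h2 := hstep y hy x hx
    rw [hcs y x] at h2
    constructor <;> linarith
  refine ⟨d, hd, fun x => sInf (V x), ?_, ?_, ?_⟩
  · intro x hx
    have h1 : f x - ε ≤ sInf (V x) := le_csInf ⟨_, hVf x hx⟩ (hVlow x hx)
    have h2 : sInf (V x) ≤ f x := csInf_le (hVbdd x hx) (hVf x hx)
    rw [abs_le]; constructor <;> linarith
  · intro x hx y hy
    exact (hlip x hx y hy).trans (hcd x y)
  · intro x hx y hy hxy
    have := hlip x hx y hy
    simpa only [hc, if_pos hxy] using this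

/-- `f` is `C`-Lipschitz, with a real constant. -/
def LipR {M : Type*} [MetricSpace M] (C : ℝ) (f : M → ℝ) : Prop :=
  ∀ x y, |f x - f y| ≤ C * dist x y

open Classical in
/-- The functional on the free space induced by the function `f`. -/
def pr {M : Type*} [MetricSpace M] (o : M) {F : Type*} [NormedAddCommGroup F]
    [NormedSpace ℝ F] (δ : M → F) (f : M → ℝ) : F →L[ℝ] ℝ :=
  if h : ∃ φ : F →L[ℝ] ℝ, ∀ x, φ (δ x) = f x - f o then h.choose else 0

section free
variable {M : Type*} [MetricSpace M] {o : M} {F : Type*} [NormedAddCommGroup F]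
    [NormedSpace ℝ F] {δ : M → F}

theorem LipR.sub {C D : ℝ} {f g : M → ℝ} (hf : LipR C f) (hg : LipR D g) :
    LipR (C + D) (fun x => f x - g x) := by
  intro x y
  have e : f x - g x - (f y - g y) = (f x - f y) - (g x - g y) := by ring
  simp only [e]
  have := abs_sub (f x - f y) (g x - g y)
  linarith [hf x y, hg x y]

theorem LipR.mono {C D : ℝ} {f : M → ℝ} (hf : LipR C f) (h : C ≤ D) : LipR D f := by
  intro x y
  exact (hf x y).trans (mul_le_mul_of_nonneg_right h dist_nonneg)

theorem LipR.lip {C : ℝ} {f : M → ℝ} (hf : LipR C f) (hC : 0 ≤ C) :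
    LipschitzWith ⟨C, hC⟩ f := by
  apply LipschitzWith.of_dist_le_mul
  intro x y
  rw [Real.dist_eq]
  exact hf x y

theorem func_ext (hδ : IsLipschitzFree o δ) {φ ψ : F →L[ℝ] ℝ}
    (h : ∀ x, φ (δ x) = ψ (δ x)) : φ = ψ := by
  apply ContinuousLinearMap.ext_on hδ.dense_span
  rintro _ ⟨x, rfl⟩
  exact h x

theorem pr_exists (hδ : IsLipschitzFree o δ) {C : ℝ} (hC : 0 ≤ C) {f : M → ℝ}
    (hf : LipR C f) : ∃ φ : F →L[ℝ] ℝ, ‖φ‖ ≤ C ∧ ∀ x, φ (δ x) = f x - f o := by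
  have h1 : LipR C (fun x => f x - f o) := by
    intro x y
    simpa using hf x y
  exact hδ.lift ⟨C, hC⟩ _ (h1.lip hC) (sub_self _)

theorem pr_apply (hδ : IsLipschitzFree o δ) {C : ℝ} (hC : 0 ≤ C) {f : M → ℝ}
    (hf : LipR C f) (x : M) : pr o δ f (δ x) = f x - f o := by
  obtain ⟨φ, -, h⟩ := pr_exists hδ hC hf
  have h' : ∃ φ : F →L[ℝ] ℝ, ∀ x, φ (δ x) = f x - f o := ⟨φ, h⟩
  rw [pr, dif_pos h']
  exact h'.choose_spec x

theorem norm_le_of_lip (hδ : IsLipschitzFree o δ) {C : ℝ} (hC : 0 ≤ C) (ψ : F →L[ℝ] ℝ)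
    (hf : LipR C (fun x => ψ (δ x))) : ‖ψ‖ ≤ C := by
  obtain ⟨φ, h1, h2⟩ := pr_exists hδ hC hf
  have : ψ = φ := func_ext hδ fun x => by rw [h2, hδ.map_base]; simp
  rwa [this]

theorem pr_norm (hδ : IsLipschitzFree o δ) {C : ℝ} (hC : 0 ≤ C) {f : M → ℝ}
    (hf : LipR C f) : ‖pr o δ f‖ ≤ C := by
  apply norm_le_of_lip hδ hC
  intro x y
  simp only [pr_apply hδ hC hf]
  simpa using hf x y

theorem pr_sub (hδ : IsLipschitzFree o δ) {C D : ℝ} (hC : 0 ≤ C) (hD : 0 ≤ D)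
    {f g : M → ℝ} (hf : LipR C f) (hg : LipR D g) (γ : F) :
    pr o δ (fun x => f x - g x) γ = pr o δ f γ - pr o δ g γ := by
  have : pr o δ (fun x => f x - g x) = pr o δ f - pr o δ g := by
    apply func_ext hδ
    intro x
    rw [pr_apply hδ (add_nonneg hC hD) (hf.sub hg), _root_.sub_apply,
      pr_apply hδ hC hf, pr_apply hδ hD hg]
    ring
  rw [this]; rfl

theorem pr_func (hδ : IsLipschitzFree o δ) (φ : F →L[ℝ] ℝ) :
    pr o δ (fun x => φ (δ x)) = φ := by
  apply func_ext hδ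
  have h : LipR ‖φ‖ (fun x => φ (δ x)) := by
    intro x y
    rw [← map_sub, ← hδ.isometry.dist_eq x y, dist_eq_norm]
    exact φ.le_opNorm _
  intro x
  rw [pr_apply hδ (norm_nonneg _) h, hδ.map_base]
  simp

theorem func_lip (hδ : IsLipschitzFree o δ) (φ : F →L[ℝ] ℝ) {C : ℝ} (hC : ‖φ‖ ≤ C) :
    LipR C (fun x => φ (δ x)) := by
  intro x y
  rw [← map_sub, ← hδ.isometry.dist_eq x y, dist_eq_norm]
  exact (φ.le_opNorm _).trans (mul_le_mul_of_nonneg_right hC (norm_nonneg _))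

/-- Weak-star continuity: pairing with a fixed element is controlled by finitely many values. -/
theorem pr_small (hδ : IsLipschitzFree o δ) (γ : F) {C ε : ℝ} (hC : 0 ≤ C) (hε : 0 < ε) :
    ∃ E : Set M, E.Finite ∧ ∃ e > (0 : ℝ), ∀ w : M → ℝ, LipR C w → (∀ x ∈ E, |w x| ≤ e) →
      |pr o δ w γ| ≤ ε := by
  have key : ∀ μ ∈ Submodule.span ℝ (Set.range δ), ∀ ε > (0 : ℝ),
      ∃ E : Set M, E.Finite ∧ ∃ e > (0 : ℝ), ∀ w : M → ℝ, LipR C w → (∀ x ∈ E, |w x| ≤ e) →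
      |pr o δ w μ| ≤ ε := by
    intro μ hμ
    induction hμ using Submodule.span_induction with
    | mem μ h =>
      obtain ⟨x, rfl⟩ := h
      intro ε hε
      refine ⟨{x, o}, by simp, ε / 2, by positivity, ?_⟩
      intro w hw hx
      rw [pr_apply hδ hC hw]
      have h1 := hx x (by simp)
      have h2 := hx o (by simp)
      have := abs_sub (w x) (w o)
      linarith
    | zero =>
      intro ε hε
      exact ⟨∅, Set.finite_empty, 1, one_pos, fun w _ _ => by simpa using hε.le⟩
    | add a b _ _ ha hb =>
      intro ε hε
      obtain ⟨E1, hE1, e1, he1, h1⟩ := ha (ε / 2) (by positivity)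
      obtain ⟨E2, hE2, e2, he2, h2⟩ := hb (ε / 2) (by positivity)
      refine ⟨E1 ∪ E2, hE1.union hE2, min e1 e2, lt_min he1 he2, ?_⟩
      intro w hw hx
      have h3 := h1 w hw fun x hxE => (hx x (Or.inl hxE)).trans (min_le_left _ _)
      have h4 := h2 w hw fun x hxE => (hx x (Or.inr hxE)).trans (min_le_right _ _)
      rw [map_add]
      have := abs_add_le (pr o δ w a) (pr o δ w b)
      linarith
    | smul c a _ ha =>
      intro ε hε
      obtain ⟨E1, hE1, e1, he1, h1⟩ := ha (ε / (|c| + 1)) (by positivity)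
      refine ⟨E1, hE1, e1, he1, ?_⟩
      intro w hw hx
      have h3 := h1 w hw hx
      rw [map_smul, smul_eq_mul, abs_mul]
      rw [le_div_iff₀ (by positivity)] at h3
      nlinarith [abs_nonneg (pr o δ w a), abs_nonneg c]
  obtain ⟨μ, hμ, hd⟩ := Metric.mem_closure_iff.1 (hδ.dense_span γ) (ε / (2 * (C + 1)))
    (by positivity)
  obtain ⟨E, hE, e, he, h⟩ := key μ hμ (ε / 2) (by positivity)
  refine ⟨E, hE, e, he, ?_⟩
  intro w hw hx
  have h1 := h w hw hx
  have h2 := (pr o δ w).le_opNorm (γ - μ)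
  rw [map_sub, Real.norm_eq_abs] at h2
  have h3 := pr_norm hδ hC hw
  rw [dist_eq_norm, lt_div_iff₀ (by positivity)] at hd
  have h4 : ‖pr o δ w‖ * ‖γ - μ‖ ≤ C * ‖γ - μ‖ :=
    mul_le_mul_of_nonneg_right h3 (norm_nonneg _)
  have h5 : |pr o δ w γ| ≤ |pr o δ w γ - pr o δ w μ| + |pr o δ w μ| := by
    have := abs_add_le (pr o δ w γ - pr o δ w μ) (pr o δ w μ)
    simpa using this
  nlinarith [norm_nonneg (γ - μ)]

theorem wuc_of_bound {Y : Type*} [NormedAddCommGroup Y] [NormedSpace ℝ Y] (y : ℕ → Y) (C : ℝ)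
    (h : ∀ (N : ℕ) (s : ℕ → ℝ), (∀ k, |s k| ≤ 1) →
      ‖∑ k ∈ Finset.range N, s k • y k‖ ≤ C) : IsWUC y := by
  intro Φ
  refine summable_of_sum_range_le (c := ‖Φ‖ * C) (fun n => abs_nonneg _) fun N => ?_
  have h1 := h N (fun k => SignType.sign (Φ (y k))) (fun k => by
    rcases lt_trichotomy (Φ (y k)) 0 with h | h | h <;> simp [h])
  have h2 := Φ.le_opNorm (∑ k ∈ Finset.range N, ((SignType.sign (Φ (y k)) : ℝ)) • y k)
  have h3 : Φ (∑ k ∈ Finset.range N, ((SignType.sign (Φ (y k)) : ℝ)) • y k) =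
      ∑ k ∈ Finset.range N, |Φ (y k)| := by
    rw [map_sum]
    refine Finset.sum_congr rfl fun k _ => ?_
    rw [map_smul, smul_eq_mul, sign_mul_self]
  rw [h3] at h2
  exact (le_abs_self _).trans (h2.trans (mul_le_mul_of_nonneg_left h1 (norm_nonneg _)))

theorem wuc_glide (hδ : IsLipschitzFree o δ) {Γ : Set F} (hΓ : IsVStarSet Γ)
    (g : ℕ → M → ℝ) (C : ℝ) (hC : 0 ≤ C)
    (hg : ∀ N x y, ∑ k ∈ Finset.range N, |g k x - g k y| ≤ C * dist x y)
    (ε : ℝ) (hε : 0 < ε) (hbad : ∀ k, ∃ γ ∈ Γ, ε ≤ |pr o δ (g k) γ|) : False := by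
  have hl : ∀ k, LipR C (g k) := by
    intro k x y
    refine le_trans ?_ (hg (k + 1) x y)
    exact Finset.single_le_sum (f := fun k => |g k x - g k y|) (fun _ _ => abs_nonneg _)
      (Finset.self_mem_range_succ k)
  have hw : IsWUC (fun k => pr o δ (g k)) := by
    apply wuc_of_bound _ C
    intro N s hs
    apply norm_le_of_lip hδ hC
    intro x y
    simp only [_root_.sum_apply, _root_.smul_apply, smul_eq_mul,
      pr_apply hδ hC (hl _)]
    rw [← Finset.sum_sub_distrib]
    refine (Finset.abs_sum_le_sum_abs _ _).trans (le_trans ?_ (hg N x y))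
    refine Finset.sum_le_sum fun k _ => ?_
    have e : s k * (g k x - g k o) - s k * (g k y - g k o) = s k * (g k x - g k y) := by ring
    rw [e, abs_mul]
    nlinarith [hs k, abs_nonneg (g k x - g k y)]
  obtain ⟨n, hn⟩ := (hΓ _ hw (ε / 2) (by positivity)).exists
  obtain ⟨γ, hγ, h⟩ := hbad n
  have := hn γ hγ
  linarith

theorem vstar_bounded {Γ : Set F} (hΓ : IsVStarSet Γ) :
    ∃ R, ∀ γ ∈ Γ, ‖γ‖ ≤ R := by
  by_contra hcon
  push Not at hcon
  have h1 : ∀ n : ℕ, ∃ γ ∈ Γ, (2 : ℝ) ^ n < ‖γ‖ := fun n => hcon _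
  choose γ hγ hlt using h1
  choose φ hφ1 hφ2 using fun n => exists_dual_vector'' ℝ (γ n)
  have hw : IsWUC (fun n => ((1 / 2 : ℝ) ^ n) • φ n) := by
    apply wuc_of_bound _ 2
    intro N s hs
    refine (norm_sum_le _ _).trans (le_trans ?_ (sum_geometric_two_le N))
    refine Finset.sum_le_sum fun k _ => ?_
    rw [norm_smul, norm_smul, Real.norm_eq_abs, Real.norm_eq_abs,
      abs_of_nonneg (by positivity : (0 : ℝ) ≤ (1 / 2) ^ k)]
    have := mul_le_one₀ (hs k) (norm_nonneg (φ k)) (hφ1 k)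
    have h3 : (0 : ℝ) ≤ (1 / 2) ^ k := by positivity
    nlinarith
  obtain ⟨n, hn⟩ := (hΓ _ hw (1 / 2) (by norm_num)).exists
  have h2 := hn (γ n) (hγ n)
  rw [_root_.smul_apply, hφ2, smul_eq_mul, RCLike.ofReal_real_eq_id, id,
    abs_of_nonneg (by positivity)] at h2
  have h3 : (1 / 2 : ℝ) ^ n * 2 ^ n = 1 := by rw [← mul_pow]; norm_num
  have h4 : (0 : ℝ) < (1 / 2) ^ n := by positivity
  nlinarith [hlt n]

/-- cut-off profile: `1` for `u ≤ r`, `0` for `u ≥ 2 * r`. -/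
def cut (r u : ℝ) : ℝ := max 0 (min 1 (2 - u / r))

theorem cut_nonneg (r u : ℝ) : 0 ≤ cut r u := le_max_left _ _

theorem cut_le_one (r u : ℝ) : cut r u ≤ 1 := max_le zero_le_one (min_le_left _ _)

theorem cut_one {r u : ℝ} (hr : 0 < r) (h : u ≤ r) : cut r u = 1 := by
  have : u / r ≤ 1 := (div_le_one hr).2 h
  rw [cut, min_eq_left (by linarith), max_eq_right zero_le_one]

theorem cut_zero {r u : ℝ} (hr : 0 < r) (h : 2 * r ≤ u) : cut r u = 0 := by
  have : 2 ≤ u / r := (le_div_iff₀ hr).2 h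
  rw [cut, max_eq_left]
  exact (min_le_right _ _).trans (by linarith)

theorem cut_lip {r : ℝ} (hr : 0 < r) (u v : ℝ) : |cut r u - cut r v| ≤ 1 / r * |u - v| := by
  have h1 := abs_max_sub_max_le_abs (min 1 (2 - u / r)) (min 1 (2 - v / r)) 0
  have h2 := abs_min_sub_min_le_max 1 (2 - u / r) 1 (2 - v / r)
  rw [sub_self, abs_zero, max_eq_right (abs_nonneg _)] at h2
  have e : 2 - u / r - (2 - v / r) = (1 / r) * (v - u) := by ring
  rw [e, abs_mul, abs_of_pos (by positivity : 0 < 1 / r), abs_sub_comm v u] at h2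
  rw [max_comm _ 0, max_comm _ 0] at h1
  exact h1.trans h2

theorem prod_pair {M : Type*} {S : Set M} {f χ : M → ℝ} {c B a : ℝ} {x y : M}
    (hχ : ∀ z, z ∉ S → χ z = 0) (h0 : ∀ z, 0 ≤ χ z) (h1 : ∀ z, χ z ≤ 1)
    (ha : |χ x - χ y| ≤ a) (hc : 0 ≤ c) (hf : x ∈ S → y ∈ S → |f x - f y| ≤ c)
    (hB : ∀ z ∈ S, |f z| ≤ B) (hB0 : 0 ≤ B) :
    |f x * χ x - f y * χ y| ≤ c + B * a := by
  have ha0 : 0 ≤ a := (abs_nonneg _).trans ha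
  have hBa : 0 ≤ B * a := mul_nonneg hB0 ha0
  by_cases hx : x ∈ S
  · by_cases hy : y ∈ S
    · have e : f x * χ x - f y * χ y = (f x - f y) * χ y + f x * (χ x - χ y) := by ring
      rw [e]
      refine (abs_add_le _ _).trans (add_le_add ?_ ?_)
      · rw [abs_mul, abs_of_nonneg (h0 y)]
        nlinarith [hf hx hy, h0 y, h1 y, abs_nonneg (f x - f y)]
      · rw [abs_mul]
        exact mul_le_mul (hB x hx) ha (abs_nonneg _) hB0
    · have e : f x * χ x - f y * χ y = f x * (χ x - χ y) := by rw [hχ y hy]; ring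
      rw [e, abs_mul]
      have := mul_le_mul (hB x hx) ha (abs_nonneg _) hB0
      linarith
  · by_cases hy : y ∈ S
    · have e : f x * χ x - f y * χ y = f y * (χ x - χ y) := by rw [hχ x hx]; ring
      rw [e, abs_mul]
      have := mul_le_mul (hB y hy) ha (abs_nonneg _) hB0
      linarith
    · rw [hχ x hx, hχ y hy]
      simp only [mul_zero, sub_zero, abs_zero]
      linarith

/-- product of a Lipschitz function with a cut-off -/
theorem lip_cut {f u : M → ℝ} {C B r : ℝ} (hC : 0 ≤ C) (hB0 : 0 ≤ B) (hr : 0 < r)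
    (hf : LipR C f) (hu : LipR 1 u) (hB : ∀ z, u z ≤ 2 * r → |f z| ≤ B) :
    LipR (C + B * (1 / r)) (fun x => f x * cut r (u x)) := by
  intro x y
  have h := prod_pair (S := {z | u z ≤ 2 * r}) (f := f) (χ := fun z => cut r (u z))
    (c := C * dist x y) (B := B) (a := 1 / r * dist x y) (x := x) (y := y)
    (fun z hz => cut_zero hr (not_le.1 hz).le) (fun z => cut_nonneg _ _)
    (fun z => cut_le_one _ _) ?_ (by positivity) (fun _ _ => hf x y) hB hB0
  · refine h.trans (le_of_eq ?_)
    ring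
  · refine (cut_lip hr _ _).trans ?_
    have := hu x y
    rw [one_mul] at this
    exact mul_le_mul_of_nonneg_left this (by positivity)

theorem lip_infDist (E : Set M) : LipR 1 (fun x => Metric.infDist x E) := by
  intro x y
  have := (Metric.lipschitz_infDist_pt E).dist_le_mul x y
  simpa [Real.dist_eq] using this

theorem lip_dist (o : M) : LipR 1 (fun x => dist x o) := by
  intro x y
  rw [one_mul]
  exact abs_dist_sub_le x y o

theorem disjoint_glide (hδ : IsLipschitzFree o δ) {Γ : Set F} (hΓ : IsVStarSet Γ)
    (𝒮 : Set (Set M)) {S0 : Set M} (hS0 : S0 ∈ 𝒮) {C ε : ℝ} (hC : 0 ≤ C) (hε : 0 < ε)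
    (h : ∀ S ∈ 𝒮, ∃ S' ∈ 𝒮, S ⊆ S' ∧ ∃ g : M → ℝ, LipR C g ∧ (∀ x ∈ S, g x = 0) ∧
      (∀ x, x ∉ S' → g x = 0) ∧ ∃ γ ∈ Γ, ε ≤ |pr o δ g γ|) : False := by
  classical
  choose! nx hnx hsub g hgl hg0 hg1 hγ using h
  set T : ℕ → Set M := fun k => nx^[k] S0 with hT
  have hTs : ∀ k, T (k + 1) = nx (T k) := fun k => Function.iterate_succ_apply' nx k S0
  have hTm : ∀ k, T k ∈ 𝒮 := by
    intro k
    induction k with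
    | zero => exact hS0
    | succ k ih => rw [hTs]; exact hnx _ ih
  refine wuc_glide hδ hΓ (fun k => g (T k)) (2 * C) (by positivity) ?_ ε hε
    (fun k => hγ _ (hTm k))
  intro N x y
  set a : M → ℕ → ℝ := fun z k => if z ∈ T k then 1 else 0 with ha
  have ha0 : ∀ z k, 0 ≤ a z k := by
    intro z k; simp only [ha]; split_ifs <;> norm_num
  have ha1 : ∀ z k, a z k ≤ 1 := by
    intro z k; simp only [ha]; split_ifs <;> norm_num
  have hmon : ∀ z k, a z k ≤ a z (k + 1) := by
    intro z k
    simp only [ha]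
    have := hsub _ (hTm k)
    rw [← hTs] at this
    split_ifs with h1 h2
    · exact le_rfl
    · exact absurd (this h1) h2
    · norm_num
    · exact le_rfl
  have hne : ∀ z k, g (T k) z ≠ 0 → a z (k + 1) - a z k = 1 := by
    intro z k hz
    have h1 : z ∉ T k := fun h => hz (hg0 _ (hTm k) z h)
    have h2 : z ∈ T (k + 1) := by
      by_contra h
      rw [hTs] at h
      exact hz (hg1 _ (hTm k) z h)
    simp only [ha, if_neg h1, if_pos h2]; norm_num
  have hterm : ∀ k, |g (T k) x - g (T k) y| ≤
      C * dist x y * ((a x (k + 1) - a x k) + (a y (k + 1) - a y k)) := by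
    intro k
    have h1 := hgl _ (hTm k) x y
    have hd : 0 ≤ C * dist x y := by positivity
    have hx := hmon x k
    have hy := hmon y k
    by_cases hx0 : g (T k) x = 0
    · by_cases hy0 : g (T k) y = 0
      · rw [hx0, hy0]
        simp only [sub_self, abs_zero]
        apply mul_nonneg hd; linarith
      · have := hne y k hy0
        nlinarith
    · have := hne x k hx0
      nlinarith
  refine (Finset.sum_le_sum fun k _ => hterm k).trans ?_
  rw [← Finset.mul_sum, Finset.sum_add_distrib, Finset.sum_range_sub, Finset.sum_range_sub]
  have hd : 0 ≤ C * dist x y := by positivity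
  nlinarith [ha1 x N, ha1 y N, ha0 x 0, ha0 y 0]

theorem tight_ball (hδ : IsLipschitzFree o δ) {Γ : Set F} (hΓ : IsVStarSet Γ)
    {C ε : ℝ} (hC : 0 ≤ C) (hε : 0 < ε) :
    ∃ R > (0 : ℝ), ∀ f : M → ℝ, LipR C f → (∀ x, dist x o ≤ R → f x = 0) →
      ∀ γ ∈ Γ, |pr o δ f γ| ≤ ε := by
  by_contra hcon
  push Not at hcon
  refine disjoint_glide hδ hΓ {S | ∃ R > (0 : ℝ), S = {x | dist x o ≤ R}}
    (S0 := {x | dist x o ≤ 1}) ⟨1, one_pos, rfl⟩ (C := 3 * C) (ε := ε / 2)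
    (by positivity) (by positivity) ?_
  rintro _ ⟨R, hR, rfl⟩
  obtain ⟨f, hf, hf0, γ, hγ, hlt⟩ := hcon R hR
  obtain ⟨E, hE, e, he, hsm⟩ := pr_small hδ γ (C := C + 3 * C) (ε := ε / 2)
    (by positivity) (by positivity)
  obtain ⟨R1, hR1⟩ := hE.isBounded.subset_closedBall o
  set R' := max R R1 with hR'
  have hR'0 : 0 < R' := lt_of_lt_of_le hR (le_max_left _ _)
  have hfo : f o = 0 := hf0 o (by simpa using hR.le)
  have hg : LipR (3 * C) (fun x => f x * cut R' (dist x o)) := by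
    have := lip_cut (B := C * (2 * R')) hC (by positivity) hR'0 hf (lip_dist o) (by
      intro z hz
      have := hf z o
      rw [hfo, sub_zero] at this
      exact this.trans (mul_le_mul_of_nonneg_left hz hC))
    refine this.mono (le_of_eq ?_)
    field_simp
    ring
  refine ⟨_, ⟨2 * R', by positivity, rfl⟩, ?_, fun x => f x * cut R' (dist x o), hg, ?_, ?_,
    γ, hγ, ?_⟩
  · intro x hx
    have h1 : dist x o ≤ R := hx
    have : R ≤ R' := le_max_left _ _
    change dist x o ≤ 2 * R'
    linarith
  · intro x hx
    simp only [hf0 x hx, zero_mul]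
  · intro x hx
    have h1 : ¬ dist x o ≤ 2 * R' := hx
    simp only [cut_zero hR'0 (not_le.1 h1).le, mul_zero]
  · have h1 := hsm _ (hf.sub hg) (by
      intro x hx
      have : dist x o ≤ R' := (hR1 hx).trans (le_max_right _ _)
      rw [cut_one hR'0 this]
      simpa using he.le)
    rw [pr_sub hδ hC (by positivity) hf hg] at h1
    have := abs_sub_abs_le_abs_sub (pr o δ f γ) (pr o δ (fun x => f x * cut R' (dist x o)) γ)
    linarith

theorem tight_net (hδ : IsLipschitzFree o δ) {Γ : Set F} (hΓ : IsVStarSet Γ)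
    {C B ε d : ℝ} (hC : 0 ≤ C) (hB : 0 ≤ B) (hε : 0 < ε) (hd : 0 < d) :
    ∃ E : Set M, E.Finite ∧ E.Nonempty ∧ ∀ f : M → ℝ, LipR C f → (∀ x, |f x| ≤ B) →
      (∀ x, Metric.infDist x E ≤ d → f x = 0) → ∀ γ ∈ Γ, |pr o δ f γ| ≤ ε := by
  by_contra hcon
  push Not at hcon
  set C' := C + B * (1 / (d / 2)) with hC'
  have hC'0 : 0 ≤ C' := by positivity
  refine disjoint_glide hδ hΓ {S | ∃ E : Set M, E.Finite ∧ E.Nonempty ∧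
      S = {x | Metric.infDist x E ≤ d}}
    (S0 := {x | Metric.infDist x {o} ≤ d}) ⟨{o}, by simp, by simp, rfl⟩ (C := C') (ε := ε / 2)
    hC'0 (by positivity) ?_
  rintro _ ⟨E, hE, hEne, rfl⟩
  obtain ⟨f, hf, hfB, hf0, γ, hγ, hlt⟩ := hcon E hE hEne
  obtain ⟨E', hE', e, he, hsm⟩ := pr_small hδ γ (C := C + C') (ε := ε / 2)
    (by positivity) (by positivity)
  have hg : LipR C' (fun x => f x * cut (d / 2) (Metric.infDist x (E ∪ E'))) :=
    lip_cut hC hB (by positivity) hf (lip_infDist _) (fun z _ => hfB z)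
  refine ⟨_, ⟨E ∪ E', hE.union hE', hEne.inl, rfl⟩, ?_, _, hg, ?_, ?_, γ, hγ, ?_⟩
  · intro x hx
    exact (Metric.infDist_le_infDist_of_subset Set.subset_union_left hEne).trans hx
  · intro x hx
    simp only [hf0 x hx, zero_mul]
  · intro x hx
    have h1 : ¬ Metric.infDist x (E ∪ E') ≤ d := hx
    have h2 : cut (d / 2) (Metric.infDist x (E ∪ E')) = 0 :=
      cut_zero (by positivity) (by linarith [not_le.1 h1])
    simp only [h2, mul_zero]
  · have h1 := hsm _ (hf.sub hg) (by
      intro x hx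
      have h2 : cut (d / 2) (Metric.infDist x (E ∪ E')) = 1 :=
        cut_one (by positivity) (by
          rw [Metric.infDist_zero_of_mem (Set.mem_union_right E hx)]; positivity)
      rw [h2]
      simpa using he.le)
    rw [pr_sub hδ hC hC'0 hf hg] at h1
    have := abs_sub_abs_le_abs_sub (pr o δ f γ)
      (pr o δ (fun x => f x * cut (d / 2) (Metric.infDist x (E ∪ E'))) γ)
    linarith

/-- A Kuratowski-type lemma. -/
theorem kuratowski [CompleteSpace M] [LocallyCompactSpace M] (E : ℕ → Set M)
    (hE : ∀ n, (E n).Finite) (hne : ∀ n, (E n).Nonempty) (d : ℕ → ℝ)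
    (hd : Tendsto d atTop (𝓝 0)) :
    ∃ W : Set M, IsCompact W ∧ ∃ n, ∀ x, (∀ j < n, Metric.infDist x (E j) ≤ d j) → x ∈ W := by
  set U : ℕ → Set M := fun n => {x | ∀ j < n, Metric.infDist x (E j) ≤ d j} with hU
  set K : Set M := {x | ∀ j, Metric.infDist x (E j) ≤ d j} with hK
  have hanti : ∀ m n, m ≤ n → U n ⊆ U m := fun m n hmn x hx j hj => hx j (hj.trans_le hmn)
  have key : ∀ V : Ultrafilter M, (∀ n, U n ∈ V) → ∃ x ∈ K, (V : Filter M) ≤ 𝓝 x := by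
    intro V hV
    have hcau : Cauchy (V : Filter M) := by
      rw [Metric.cauchy_iff]
      refine ⟨V.neBot, fun ε hε => ?_⟩
      obtain ⟨n, hn⟩ := (hd.eventually (gt_mem_nhds (by positivity : (0 : ℝ) < ε / 2))).exists
      have hcov : U (n + 1) ⊆ ⋃ e ∈ E n, Metric.ball e (ε / 2) := by
        intro x hx
        have h1 := hx n (Nat.lt_succ_self n)
        obtain ⟨e, he, h2⟩ := (Metric.infDist_lt_iff (hne n)).1 (h1.trans_lt hn)
        exact Set.mem_biUnion he h2
      have hmem := Filter.mem_of_superset (hV (n + 1)) hcov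
      obtain ⟨e, -, he⟩ := (Ultrafilter.finite_biUnion_mem_iff (hE n)).1 hmem
      refine ⟨_, he, fun x hx y hy => ?_⟩
      have := dist_triangle_right x y e
      rw [Metric.mem_ball] at hx hy
      linarith
    obtain ⟨x, hx⟩ := CompleteSpace.complete hcau
    refine ⟨x, ?_, hx⟩
    intro j
    have hcl : IsClosed {x | Metric.infDist x (E j) ≤ d j} :=
      isClosed_le (Metric.continuous_infDist_pt _) continuous_const
    suffices h : x ∈ {x | Metric.infDist x (E j) ≤ d j} from h
    refine hcl.mem_of_tendsto (b := (V : Filter M)) (f := id) hx ?_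
    filter_upwards [hV (j + 1)] with y hy
    exact hy j (Nat.lt_succ_self j)
  have hKc : IsCompact K := by
    rw [isCompact_iff_ultrafilter_le_nhds]
    intro V hV
    refine key V fun n => ?_
    exact Filter.mem_of_superset (Filter.le_principal_iff.1 hV) fun x hx j _ => hx j
  obtain ⟨W, hW, hKW⟩ := exists_compact_superset hKc
  refine ⟨W, hW, ?_⟩
  by_contra hcon
  push Not at hcon
  choose z hzU hzW using hcon
  set V : Ultrafilter M := (Filter.hyperfilter ℕ : Ultrafilter ℕ).map z with hVdef
  have hle : ((Filter.hyperfilter ℕ : Ultrafilter ℕ) : Filter ℕ) ≤ atTop :=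
    Nat.hyperfilter_le_atTop
  obtain ⟨x, hxK, hx⟩ := key V (by
    intro n
    rw [hVdef, Ultrafilter.mem_map]
    apply hle
    filter_upwards [eventually_ge_atTop n] with m hm
    exact hanti n m hm (hzU m))
  have h1 : W ∈ V := hx (mem_interior_iff_mem_nhds.1 (hKW hxK))
  rw [hVdef, Ultrafilter.mem_map] at h1
  obtain ⟨n, hn⟩ := Filter.Eventually.exists (f := ((Filter.hyperfilter ℕ : Ultrafilter ℕ) :
    Filter ℕ)) (p := fun n => z n ∈ W) h1
  exact hzW n hn

theorem tight_compact [CompleteSpace M] [LocallyCompactSpace M]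
    (hδ : IsLipschitzFree o δ) {Γ : Set F} (hΓ : IsVStarSet Γ)
    {C ε : ℝ} (hC : 0 ≤ C) (hε : 0 < ε) :
    ∃ K : Set M, IsCompact K ∧ o ∈ K ∧ ∀ f : M → ℝ, LipR C f → (∀ x ∈ K, f x = 0) →
      ∀ γ ∈ Γ, |pr o δ f γ| ≤ ε := by
  obtain ⟨R, hR, hball⟩ := tight_ball hδ hΓ (C := C + 3 * C) (ε := ε / 2) (by positivity)
    (by positivity)
  set B := C * (2 * R) with hB
  have hB0 : 0 ≤ B := by positivity
  set d : ℕ → ℝ := fun n => (1 / 2) ^ n with hd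
  have hdpos : ∀ n, 0 < d n := fun n => by positivity
  set Cs : ℕ → ℝ := fun n => Nat.rec (3 * C) (fun j c => c + B * (1 / d j)) n with hCs
  have hCs1 : ∀ n, Cs (n + 1) = Cs n + B * (1 / d n) := fun n => rfl
  have hCs0 : ∀ n, 0 ≤ Cs n := by
    intro n
    induction n with
    | zero => change 0 ≤ 3 * C; positivity
    | succ n ih => rw [hCs1]; have := hdpos n; positivity
  have hnet := fun n => tight_net hδ hΓ (C := Cs n + Cs (n + 1)) (B := B)
    (ε := ε / 4 * (1 / 2) ^ n) (d := d n) (add_nonneg (hCs0 n) (hCs0 (n + 1))) hB0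
    (by positivity) (hdpos n)
  choose E hE hEne hEf using hnet
  obtain ⟨W, hW, n, hn⟩ := kuratowski E hE hEne (fun n => 2 * d n) (by
    have := tendsto_pow_atTop_nhds_zero_of_lt_one (r := (1 / 2 : ℝ)) (by norm_num) (by norm_num)
    have h2 := this.const_mul 2
    rw [mul_zero] at h2
    exact h2)
  refine ⟨insert o W, hW.insert o, Set.mem_insert _ _, ?_⟩
  intro f hf hf0 γ hγ
  have hfo : f o = 0 := hf0 o (Set.mem_insert _ _)
  set fs : ℕ → M → ℝ := fun k => Nat.rec (fun x => f x * cut R (dist x o))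
    (fun j g x => g x * cut (d j) (Metric.infDist x (E j))) k with hfs
  have hfs1 : ∀ k, fs (k + 1) = fun x => fs k x * cut (d k) (Metric.infDist x (E k)) :=
    fun k => rfl
  have hfs0 : fs 0 = fun x => f x * cut R (dist x o) := rfl
  have hfB : ∀ z, dist z o ≤ 2 * R → |f z| ≤ B := by
    intro z hz
    have := hf z o
    rw [hfo, sub_zero] at this
    exact this.trans (mul_le_mul_of_nonneg_left hz hC)
  have hfsB : ∀ k x, |fs k x| ≤ B := by
    intro k
    induction k with
    | zero =>
      intro x
      rw [hfs0]
      by_cases hx : dist x o ≤ 2 * R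
      · simp only
        rw [abs_mul, abs_of_nonneg (cut_nonneg _ _)]
        nlinarith [hfB x hx, cut_nonneg R (dist x o), cut_le_one R (dist x o), abs_nonneg (f x)]
      · simp only [cut_zero hR (not_le.1 hx).le, mul_zero, abs_zero]
        exact hB0
    | succ k ih =>
      intro x
      rw [hfs1]
      simp only
      rw [abs_mul, abs_of_nonneg (cut_nonneg _ _)]
      nlinarith [ih x, cut_nonneg (d k) (Metric.infDist x (E k)),
        cut_le_one (d k) (Metric.infDist x (E k)), abs_nonneg (fs k x)]
  have hfsL : ∀ k, LipR (Cs k) (fs k) := by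
    intro k
    induction k with
    | zero =>
      have := lip_cut (B := B) hC hB0 hR hf (lip_dist o) hfB
      refine this.mono (le_of_eq ?_)
      change _ = 3 * C
      rw [hB]
      field_simp
      ring
    | succ k ih =>
      rw [hCs1, hfs1]
      exact lip_cut (hCs0 k) hB0 (hdpos k) ih (lip_infDist _) fun z _ => hfsB k z
  have hfsS : ∀ k x, fs k x ≠ 0 → f x ≠ 0 ∧ ∀ j < k, Metric.infDist x (E j) ≤ 2 * d j := by
    intro k
    induction k with
    | zero =>
      intro x hx
      rw [hfs0] at hx
      exact ⟨left_ne_zero_of_mul hx, fun j hj => absurd hj (Nat.not_lt_zero j)⟩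
    | succ k ih =>
      intro x hx
      rw [hfs1] at hx
      obtain ⟨h1, h2⟩ := ih x (left_ne_zero_of_mul hx)
      refine ⟨h1, fun j hj => ?_⟩
      rcases Nat.lt_succ_iff_lt_or_eq.1 hj with h | rfl
      · exact h2 j h
      · by_contra hgt
        exact right_ne_zero_of_mul hx (cut_zero (hdpos j) (not_le.1 hgt).le)
  have hzero : fs n = fun _ => 0 := by
    funext x
    by_contra hx
    obtain ⟨h1, h2⟩ := hfsS n x hx
    exact h1 (hf0 x (Set.mem_insert_of_mem _ (hn x h2)))
  have hprz : pr o δ (fs n) γ = 0 := by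
    rw [hzero]
    have h1 : LipR 0 (fun _ : M => (0 : ℝ)) := by intro x y; simp
    have h2 := pr_norm hδ le_rfl h1
    have h3 : pr o δ (fun _ => (0 : ℝ)) = 0 := norm_le_zero_iff.1 h2
    rw [h3]; rfl
  have hL0 : LipR (3 * C) (fs 0) := hfsL 0
  have hfirst : |pr o δ f γ - pr o δ (fs 0) γ| ≤ ε / 2 := by
    rw [← pr_sub hδ hC (by positivity) hf hL0]
    refine hball _ (hf.sub hL0) ?_ γ hγ
    intro x hx
    rw [hfs0]
    simp only [cut_one hR hx, mul_one, sub_self]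
  have hstep : ∀ k, |pr o δ (fs k) γ - pr o δ (fs (k + 1)) γ| ≤ ε / 4 * (1 / 2) ^ k := by
    intro k
    rw [← pr_sub hδ (hCs0 k) (hCs0 (k + 1)) (hfsL k) (hfsL (k + 1))]
    refine hEf k _ ((hfsL k).sub (hfsL (k + 1))) ?_ ?_ γ hγ
    · intro x
      rw [hfs1]
      have e : fs k x - fs k x * cut (d k) (Metric.infDist x (E k)) =
        fs k x * (1 - cut (d k) (Metric.infDist x (E k))) := by ring
      simp only [e]
      have h1 := cut_le_one (d k) (Metric.infDist x (E k))
      rw [abs_mul, abs_of_nonneg (by linarith : 0 ≤ 1 - cut (d k) (Metric.infDist x (E k)))]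
      nlinarith [hfsB k x, cut_nonneg (d k) (Metric.infDist x (E k)), abs_nonneg (fs k x)]
    · intro x hx
      rw [hfs1]
      simp only [cut_one (hdpos k) hx, mul_one, sub_self]
  have htel : |pr o δ (fs 0) γ - pr o δ (fs n) γ| ≤ ε / 2 := by
    rw [← Finset.sum_range_sub' (fun k => pr o δ (fs k) γ)]
    refine (Finset.abs_sum_le_sum_abs _ _).trans
      ((Finset.sum_le_sum fun k _ => hstep k).trans ?_)
    rw [← Finset.mul_sum]
    have := sum_geometric_two_le n
    nlinarith
  rw [hprz, sub_zero] at htel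
  have := abs_add_le (pr o δ f γ - pr o δ (fs 0) γ) (pr o δ (fs 0) γ)
  rw [sub_add_cancel] at this
  linarith

theorem tb_of_net {Γ : Set F} {R : ℝ} (hR : ∀ γ ∈ Γ, ‖γ‖ ≤ R)
    (h : ∀ ε > (0 : ℝ), ∃ V : Submodule ℝ F, FiniteDimensional ℝ V ∧
      ∀ γ ∈ Γ, ∃ v ∈ V, ‖γ - v‖ < ε) : TotallyBounded Γ := by
  rw [Metric.totallyBounded_iff]
  intro ε hε
  obtain ⟨V, hV, hγ⟩ := h (ε / 2) (by positivity)
  have : ProperSpace V := FiniteDimensional.proper_real V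
  have hc : IsCompact ((Subtype.val : V → F) '' Metric.closedBall (0 : V) (R + ε / 2)) :=
    (isCompact_closedBall _ _).image continuous_subtype_val
  obtain ⟨t, ht, hcov⟩ := Metric.totallyBounded_iff.1 hc.totallyBounded (ε / 2) (by positivity)
  refine ⟨t, ht, ?_⟩
  intro γ hγΓ
  obtain ⟨v, hv, hd⟩ := hγ γ hγΓ
  have hvn : ‖v‖ ≤ R + ε / 2 := by
    have h1 := norm_sub_norm_le v γ
    rw [norm_sub_rev] at h1
    linarith [hR γ hγΓ]
  have hm := hcov ⟨⟨v, hv⟩, by simpa using hvn, rfl⟩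
  simp only [Set.mem_iUnion, Metric.mem_ball] at hm ⊢
  obtain ⟨y, hy, h2⟩ := hm
  refine ⟨y, hy, ?_⟩
  have h3 := dist_triangle γ v y
  rw [dist_eq_norm γ v] at h3
  linarith

theorem exists_func (V : Submodule ℝ F) (γ : F) {ε : ℝ} (h : ∀ v ∈ V, ε ≤ ‖γ - v‖) :
    ∃ φ : F →L[ℝ] ℝ, ‖φ‖ ≤ 1 ∧ (∀ v ∈ V, φ v = 0) ∧ ε ≤ |φ γ| := by
  obtain ⟨g, hg1, hg2⟩ := exists_dual_vector'' ℝ (Submodule.Quotient.mk γ : F ⧸ V)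
  refine ⟨g.comp V.mkQL, ?_, ?_, ?_⟩
  · refine ContinuousLinearMap.opNorm_le_bound _ zero_le_one fun x => ?_
    have h1 := g.le_opNorm (V.mkQL x)
    have h2 : ‖V.mkQL x‖ ≤ ‖x‖ := Submodule.Quotient.norm_mk_le V x
    rw [ContinuousLinearMap.comp_apply]
    nlinarith [norm_nonneg (V.mkQL x), norm_nonneg g]
  · intro v hv
    have : V.mkQL v = 0 := (Submodule.Quotient.mk_eq_zero V).2 hv
    rw [ContinuousLinearMap.comp_apply, this, map_zero]
  · have e : (g.comp V.mkQL) γ = ‖(Submodule.Quotient.mk γ : F ⧸ V)‖ := by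
      rw [ContinuousLinearMap.comp_apply]
      exact hg2
    rw [e, abs_of_nonneg (norm_nonneg _)]
    apply le_of_forall_pos_le_add
    intro e he
    obtain ⟨m, hm, hlt⟩ := Submodule.Quotient.norm_mk_lt (Submodule.Quotient.mk γ : F ⧸ V) he
    have h1 : γ - m ∈ V := (Submodule.Quotient.eq V).1 hm.symm
    have h2 := h _ h1
    rw [sub_sub_cancel] at h2
    linarith

theorem flat_claim [CompleteSpace M] [LocallyCompactSpace M]
    (hM : Purely1Unrectifiable M) (hδ : IsLipschitzFree o δ) {Γ : Set F} (hΓ : IsVStarSet Γ)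
    {ε : ℝ} (hε : 0 < ε)
    (hfar : ∀ P : Set M, P.Finite → ∃ φ : F →L[ℝ] ℝ, ‖φ‖ ≤ 1 ∧ (∀ x ∈ P, φ (δ x) = 0) ∧
      ∃ γ ∈ Γ, ε ≤ |φ γ|) (τ η : ℝ) (hτ : 0 < τ) (hη : 0 < η) :
    ∃ d > (0 : ℝ), ∃ h : M → ℝ, LipR 3 h ∧ (∀ x, |h x| ≤ τ) ∧
      (∀ x y, dist x y < d → |h x - h y| ≤ η * dist x y) ∧ ∃ γ ∈ Γ, ε / 2 ≤ |pr o δ h γ| := by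
  obtain ⟨K, hK, hoK, hKf⟩ := tight_compact hδ hΓ (C := 1 + 2) (ε := ε / 4) (by norm_num)
    (by positivity)
  obtain ⟨ρ, hρ, hρc⟩ := hK.exists_isCompact_cthickening
  set r := ρ / 4 with hr
  have hr0 : 0 < r := by positivity
  set K' : Set M := {x | Metric.infDist x K ≤ 2 * r} with hK'
  have hK'c : IsCompact K' := by
    refine hρc.of_isClosed_subset
      (isClosed_le (Metric.continuous_infDist_pt _) continuous_const) ?_
    intro x hx
    have hx' : Metric.infDist x K ≤ 2 * r := hx
    obtain ⟨y, hy, hd⟩ := (Metric.infDist_lt_iff ⟨o, hoK⟩).1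
      (lt_of_le_of_lt hx' (by linarith : 2 * r < ρ))
    exact Metric.mem_cthickening_of_dist_le x y ρ K hy hd.le
  set τ' := min (τ / 2) (min (r / 2) (r * η / 4)) with hτ'
  have hτ'0 : 0 < τ' := by
    refine lt_min (by positivity) (lt_min (by positivity) (by positivity))
  have hτ1 : τ' ≤ τ / 2 := min_le_left _ _
  have hτ2 : τ' ≤ r / 2 := (min_le_right _ _).trans (min_le_left _ _)
  have hτ3 : τ' ≤ r * η / 4 := (min_le_right _ _).trans (min_le_right _ _)
  have hτr : τ' * (1 / r) ≤ 1 / 2 := by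
    rw [mul_one_div, div_le_iff₀ hr0]; linarith
  have hτη : τ' * (1 / r) ≤ η / 4 := by
    rw [mul_one_div, div_le_iff₀ hr0]; linarith
  set η' := min (η / 2) 1 with hη'
  have hη'0 : 0 < η' := lt_min (by positivity) one_pos
  obtain ⟨P, hP, hPcov⟩ := Metric.totallyBounded_iff.1 hK'c.totallyBounded τ' hτ'0
  obtain ⟨φ, hφ1, hφ0, γ, hγ, hφγ⟩ := hfar P hP
  set f : M → ℝ := fun x => φ (δ x) with hf
  have hfL : LipR 1 f := func_lip hδ φ hφ1
  have hprf : pr o δ f = φ := pr_func hδ φ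
  have hfB : ∀ x ∈ K', |f x| ≤ τ' := by
    intro x hx
    have := hPcov hx
    simp only [Set.mem_iUnion, Metric.mem_ball] at this
    obtain ⟨y, hy, hd⟩ := this
    have h1 := hfL x y
    have h2 : f y = 0 := hφ0 y hy
    rw [h2, sub_zero, one_mul] at h1
    linarith
  set χ : M → ℝ := fun x => cut r (Metric.infDist x K) with hχ
  have hχ0 : ∀ x, 0 ≤ χ x := fun x => cut_nonneg _ _
  have hχ1 : ∀ x, χ x ≤ 1 := fun x => cut_le_one _ _
  have hχS : ∀ x, x ∉ K' → χ x = 0 := fun x hx => cut_zero hr0 (not_le.1 hx).le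
  have hχK : ∀ x ∈ K, χ x = 1 := fun x hx => cut_one hr0 (by
    rw [Metric.infDist_zero_of_mem hx]; exact hr0.le)
  have hχL : ∀ x y, |χ x - χ y| ≤ 1 / r * dist x y := by
    intro x y
    refine (cut_lip hr0 _ _).trans ?_
    have := lip_infDist K x y
    rw [one_mul] at this
    exact mul_le_mul_of_nonneg_left this (by positivity)
  have hfχ : LipR 2 (fun x => f x * χ x) := by
    have := lip_cut (B := τ') zero_le_one hτ'0.le hr0 hfL (lip_infDist K) hfB
    exact this.mono (by linarith)
  have h1 : |pr o δ f γ - pr o δ (fun x => f x * χ x) γ| ≤ ε / 4 := by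
    rw [← pr_sub hδ zero_le_one zero_le_two hfL hfχ]
    refine hKf _ (hfL.sub hfχ) ?_ γ hγ
    intro x hx
    simp only [hχK x hx, mul_one, sub_self]
  obtain ⟨E, -, e, he, hsm⟩ := pr_small hδ γ (C := 2 + 3) (ε := ε / 4) (by norm_num)
    (by positivity)
  have hemin : 0 < min e τ' := lt_min he hτ'0
  obtain ⟨d, hd, g, hg1, hg2, hg3⟩ := flat_approx hM hK'c f
    (fun x y => by simpa using hfL x y) τ' hfB η' (min e τ') hη'0 (min_le_right _ _) hemin
  have hgB : ∀ x ∈ K', |g x| ≤ 2 * τ' := by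
    intro x hx
    have h2 := (hg1 x hx).trans (min_le_right _ _)
    have h3 := hfB x hx
    rw [abs_le] at h2 h3 ⊢
    constructor <;> linarith
  have hhL : LipR 3 (fun x => g x * χ x) := by
    intro x y
    have := prod_pair hχS hχ0 hχ1 (hχL x y) (dist_nonneg (x := x) (y := y))
      (fun hx hy => hg2 x hx y hy) hgB (by positivity)
    refine this.trans ?_
    have hd0 := dist_nonneg (x := x) (y := y)
    have e1 : 2 * τ' * (1 / r * dist x y) = 2 * (τ' * (1 / r)) * dist x y := by ring
    rw [e1]
    nlinarith
  refine ⟨d, hd, fun x => g x * χ x, hhL, ?_, ?_, γ, hγ, ?_⟩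
  · intro x
    by_cases hx : x ∈ K'
    · simp only
      rw [abs_mul, abs_of_nonneg (hχ0 x)]
      nlinarith [hgB x hx, hχ0 x, hχ1 x, abs_nonneg (g x)]
    · simp only [hχS x hx, mul_zero, abs_zero]
      exact hτ.le
  · intro x y hxy
    have hd0 := dist_nonneg (x := x) (y := y)
    have := prod_pair hχS hχ0 hχ1 (hχL x y) (c := η' * dist x y) (by positivity)
      (fun hx hy => hg3 x hx y hy hxy) hgB (by positivity)
    refine this.trans ?_
    have e1 : 2 * τ' * (1 / r * dist x y) = 2 * (τ' * (1 / r)) * dist x y := by ring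
    rw [e1]
    have h5 : η' ≤ η / 2 := min_le_left _ _
    nlinarith
  · have h2 : |pr o δ (fun x => f x * χ x) γ - pr o δ (fun x => g x * χ x) γ| ≤ ε / 4 := by
      rw [← pr_sub hδ zero_le_two (by norm_num) hfχ hhL]
      refine hsm _ (hfχ.sub hhL) ?_
      intro x _
      have e1 : f x * χ x - g x * χ x = (f x - g x) * χ x := by ring
      rw [e1]
      by_cases hx : x ∈ K'
      · rw [abs_mul, abs_of_nonneg (hχ0 x)]
        have h3 := (hg1 x hx).trans (min_le_left _ _)
        nlinarith [hχ0 x, hχ1 x, abs_nonneg (f x - g x)]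
      · rw [hχS x hx, mul_zero, abs_zero]
        exact he.le
    rw [hprf] at h1
    have h3 := abs_sub_abs_le_abs_sub (φ γ) (pr o δ (fun x => f x * χ x) γ)
    have h4 := abs_sub_abs_le_abs_sub (pr o δ (fun x => f x * χ x) γ)
      (pr o δ (fun x => g x * χ x) γ)
    linarith

theorem flat_glide (hδ : IsLipschitzFree o δ) {Γ : Set F} (hΓ : IsVStarSet Γ)
    {ε : ℝ} (hε : 0 < ε)
    (hcl : ∀ τ η : ℝ, 0 < τ → 0 < η → ∃ d > (0 : ℝ), ∃ h : M → ℝ, LipR 3 h ∧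
      (∀ x, |h x| ≤ τ) ∧ (∀ x y, dist x y < d → |h x - h y| ≤ η * dist x y) ∧
      ∃ γ ∈ Γ, ε ≤ |pr o δ h γ|) : False := by
  classical
  choose! D hD H hHL hHτ hHη hHγ using hcl
  set a : ℕ → ℝ := fun k => (1 / 2) ^ k with ha
  have ha0 : ∀ k, 0 < a k := fun k => by positivity
  set s : ℕ → ℝ := fun k => Nat.rec 1 (fun k t => min t (D (a k * t) (a k))) k with hs
  have hs1 : ∀ k, s (k + 1) = min (s k) (D (a k * s k) (a k)) := fun k => rfl
  have hs0 : ∀ k, 0 < s k := by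
    intro k
    induction k with
    | zero => exact one_pos
    | succ k ih =>
      rw [hs1]
      exact lt_min ih (hD _ _ (mul_pos (ha0 k) ih) (ha0 k))
  have hpos : ∀ k, 0 < a k * s k := fun k => mul_pos (ha0 k) (hs0 k)
  refine wuc_glide hδ hΓ (fun k => H (a k * s k) (a k)) 7 (by norm_num) ?_ ε hε
    (fun k => hHγ _ _ (hpos k) (ha0 k))
  intro N x y
  have hd0 := dist_nonneg (x := x) (y := y)
  set c : ℕ → ℝ := fun k => if s k ≤ dist x y then 1 else 0 with hc
  have hc1 : ∀ k, c k ≤ 1 := by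
    intro k; simp only [hc]; split_ifs <;> norm_num
  have hc0 : ∀ k, 0 ≤ c k := by
    intro k; simp only [hc]; split_ifs <;> norm_num
  have hterm : ∀ k, |H (a k * s k) (a k) x - H (a k * s k) (a k) y| ≤
      2 * dist x y * a k + 3 * dist x y * (c (k + 1) - c k) := by
    intro k
    have hle : s (k + 1) ≤ s k := by rw [hs1]; exact min_le_left _ _
    have hle2 : s (k + 1) ≤ D (a k * s k) (a k) := by rw [hs1]; exact min_le_right _ _
    have hda : 0 ≤ dist x y * a k := mul_nonneg hd0 (ha0 k).le
    by_cases h1 : s k ≤ dist x y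
    · have h2 : s (k + 1) ≤ dist x y := hle.trans h1
      simp only [hc, if_pos h1, if_pos h2, sub_self, mul_zero, add_zero]
      have h3 := hHτ _ _ (hpos k) (ha0 k) x
      have h4 := hHτ _ _ (hpos k) (ha0 k) y
      have h5 := abs_sub (H (a k * s k) (a k) x) (H (a k * s k) (a k) y)
      have h6 := mul_le_mul_of_nonneg_left h1 (ha0 k).le
      linarith
    · by_cases h2 : s (k + 1) ≤ dist x y
      · simp only [hc, if_neg h1, if_pos h2]
        have := hHL _ _ (hpos k) (ha0 k) x y
        linarith
      · simp only [hc, if_neg h1, if_neg h2, sub_self, mul_zero, add_zero]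
        have := hHη _ _ (hpos k) (ha0 k) x y ((not_le.1 h2).trans_le hle2)
        linarith
  refine (Finset.sum_le_sum fun k _ => hterm k).trans ?_
  rw [Finset.sum_add_distrib, ← Finset.mul_sum, ← Finset.mul_sum, Finset.sum_range_sub]
  have h1 := sum_geometric_two_le N
  nlinarith [hc1 N, hc0 0]

theorem vstar_totallyBounded [CompleteSpace M] [LocallyCompactSpace M]
    (hM : Purely1Unrectifiable M) (hδ : IsLipschitzFree o δ) {Γ : Set F}
    (hΓ : IsVStarSet Γ) : TotallyBounded Γ := by
  obtain ⟨R, hR⟩ := vstar_bounded hΓ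
  apply tb_of_net hR
  by_contra hcon
  push Not at hcon
  obtain ⟨ε, hε, hcon⟩ := hcon
  refine flat_glide hδ hΓ (ε := ε / 2) (by positivity) (flat_claim hM hδ hΓ hε ?_)
  intro P hP
  have hfd : FiniteDimensional ℝ (Submodule.span ℝ (δ '' P)) :=
    FiniteDimensional.span_of_finite ℝ (hP.image δ)
  obtain ⟨γ, hγ, h⟩ := hcon _ hfd
  obtain ⟨φ, h1, h2, h3⟩ := exists_func _ γ h
  exact ⟨φ, h1, fun x hx => h2 _ (Submodule.subset_span ⟨x, hx, rfl⟩), γ, hγ, h3⟩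

end free
end Helpers

/-- If `M` is a complete, locally compact, purely 1-unrectifiable pointed metric space,
then the Lipschitz-free space `F(M)` has property (V*). -/
theorem propertyVStar_of_locallyCompact_purely1Unrectifiable
    {M : Type*} [MetricSpace M] [CompleteSpace M] [LocallyCompactSpace M]
    (hM : Purely1Unrectifiable M) (o : M)
    {F : Type*} [NormedAddCommGroup F] [NormedSpace ℝ F] [CompleteSpace F]
    (δ : M → F) (hδ : IsLipschitzFree o δ) :
    HasPropertyVStar F := by
  intro Γ hΓ
  have htb := vstar_totallyBounded hM hδ hΓ
  have hc : IsCompact (closure Γ) := htb.closure.isCompact_of_isClosed isClosed_closure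
  have hcont : Continuous (toWeakSpace ℝ F) := (toWeakSpaceCLM ℝ F).continuous
  have hc' : IsCompact ((toWeakSpace ℝ F) '' closure Γ) := hc.image hcont
  exact hc'.closure_of_subset (Set.image_mono subset_closure)
end
end
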